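/- Rectifiability of the singular set: the singular set Σ = {x ∈ Ω : A_x admits more than one minimizer on D_0^{1,2}(1,+∞)} is countably H^{d(N−1)−1}-rectifiable; that is, there exist a set E ⊂ X with H^{d(N−1)−1}(E) = 0 and countably many Lipschitz maps f_i : ℝ^{d(N−1)−1} → X such that Σ ⊆ E ∪ ⋃_{i∈ℕ} f_i(ℝ^{d(N−1)−1}). -/

import Mathlib

open MeasureTheory Real Set Filter Topology
open scoped RealInnerProductSpace ENNReal

noncomputable section
namespace NBodyHJ

attribute [local instance] Classical.propDecidable

abbrev Conf (d N : ℕ) := Fin N → EuclideanSpace ℝ (Fin d)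

variable {d N : ℕ}

/-- The mass inner product on the configuration space. -/
def minner (m : Fin N → ℝ) (x y : Conf d N) : ℝ := ∑ i, m i * ⟪x i, y i⟫

/-- The mass norm on the configuration space. -/
def mnorm (m : Fin N → ℝ) (x : Conf d N) : ℝ := Real.sqrt (minner m x x)

/-- Membership in the zero-barycenter configuration space `X`. -/
def inX (m : Fin N → ℝ) (x : Conf d N) : Prop := ∑ i, m i • x i = 0

/-- Collision configurations. -/
def collision (x : Conf d N) : Prop := ∃ i j, i ≠ j ∧ x i = x j

/-- Membership in the collision-free zero-barycenter space `Ω`. -/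
def inOmega (m : Fin N → ℝ) (x : Conf d N) : Prop := inX m x ∧ ¬ collision x

/-- The Newtonian potential (with junk value `0` for a colliding pair). -/
def U (m : Fin N → ℝ) (x : Conf d N) : ℝ :=
  ∑ i : Fin N, ∑ j : Fin N, if i < j then m i * m j / ‖x i - x j‖ else 0

/-- The time interval `(t₀, T)`, where `T ∈ (t₀, +∞]` is extended-real. -/
def timeSet (t0 : ℝ) (T : EReal) : Set ℝ := {t : ℝ | t0 < t ∧ (t : EReal) < T}

/-- Membership of the pair (curve, derivative) `(φ, φ')` in `D₀^{1,2}(t₀, T)`: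
`φ` starts at `0`, takes values in `X`, is the integral of `φ'` (hence locally
absolutely continuous), and `φ'` has finite `L²` mass norm on `(t₀, T)`. -/
def InD (m : Fin N → ℝ) (t0 : ℝ) (T : EReal) (φ φ' : ℝ → Conf d N) : Prop :=
  φ t0 = 0 ∧
  (∀ t : ℝ, t0 ≤ t → (t : EReal) < T → inX m (φ t)) ∧
  (∀ t : ℝ, t0 ≤ t → (t : EReal) < T → φ t = ∫ s in Set.Ioc t0 t, φ' s) ∧
  (∀ t : ℝ, t0 ≤ t → (t : EReal) < T → IntegrableOn φ' (Set.Ioc t0 t)) ∧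
  IntegrableOn (fun t => (mnorm m (φ' t)) ^ 2) (timeSet t0 T)

/-- The norm `‖φ‖_{D_T}`. -/
def Dnorm (m : Fin N → ℝ) (t0 : ℝ) (T : EReal) (φ' : ℝ → Conf d N) : ℝ :=
  Real.sqrt (∫ t in timeSet t0 T, (mnorm m (φ' t)) ^ 2)

/-- The motion `γ(t) = φ(t) + t a + x - a` associated with `φ` in the hyperbolic case. -/
def hypCurve (a x : Conf d N) (φ : ℝ → Conf d N) (t : ℝ) : Conf d N :=
  φ t + t • a + x - a

/-- The integrand of the hyperbolic renormalized Lagrangian action. -/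
def hypIntegrand (m : Fin N → ℝ) (a x : Conf d N) (φ φ' : ℝ → Conf d N) (t : ℝ) : ℝ :=
  (mnorm m (φ' t)) ^ 2 / 2 + U m (hypCurve a x φ t) - U m (t • a)

/-- The hyperbolic renormalized Lagrangian action `A_{x,[1,T]}(φ)`, with values in
`ℝ ∪ {+∞}` : it equals the integral of the renormalized Lagrangian if this integrand is
integrable and the motion is a.e. collision-free, and `+∞` otherwise. -/
def hypAction (m : Fin N → ℝ) (a x : Conf d N) (T : EReal) (φ φ' : ℝ → Conf d N) : EReal :=
  if IntegrableOn (hypIntegrand m a x φ φ') (timeSet 1 T) ∧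
      (∀ᵐ t ∂volume.restrict (timeSet 1 T), ¬ collision (hypCurve a x φ t))
  then ((∫ t in timeSet 1 T, hypIntegrand m a x φ φ' t : ℝ) : EReal)
  else (⊤ : EReal)

/-- The infimum of the hyperbolic renormalized action over `D₀^{1,2}(1,T)`. -/
def hypInf (m : Fin N → ℝ) (a x : Conf d N) (T : EReal) : EReal :=
  ⨅ (φ : ℝ → Conf d N) (φ' : ℝ → Conf d N) (_ : InD m 1 T φ φ'), hypAction m a x T φ φ'

/-- The renormalized value function `v(x)` in the hyperbolic case. -/
def hypValue (m : Fin N → ℝ) (a x : Conf d N) : ℝ :=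
  (hypInf m a x ⊤).toReal - minner m a x


/-- The singular set `Σ` : the set of `x ∈ Ω` for which the renormalized action `A_x`
admits (at least) two minimizers on `D₀^{1,2}(1,+∞)` that differ somewhere on `[1,∞)`. -/
def singularSet (m : Fin N → ℝ) (a : Conf d N) : Set (Conf d N) :=
  {x | inOmega m x ∧ ∃ φ₁ φ₁' φ₂ φ₂' : ℝ → Conf d N,
    InD m 1 ⊤ φ₁ φ₁' ∧ InD m 1 ⊤ φ₂ φ₂' ∧
    hypAction m a x ⊤ φ₁ φ₁' = hypInf m a x ⊤ ∧
    hypAction m a x ⊤ φ₂ φ₂' = hypInf m a x ⊤ ∧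
    ∃ t : ℝ, 1 ≤ t ∧ φ₁ t ≠ φ₂ t}

/-! The value function `v(x) = inf A_x` has two distinct superdifferentials at each singular point
where it is finite, and such points are covered by countably many Lipschitz graphs over hyperplanes:
near such a point, within the singular set, the increments of `v` are bounded above by two different
slopes, which confines the set to a cone around a hyperplane.

A minimizer has no collisions: translating the colliding pair apart in a direction averaged over a
truncated Cauchy law lowers the potential near the collision by more than the kinetic energy it
costs. Hence the action along a minimizer can be differentiated in every direction, and by
minimality its first variation depends only on the displacement of the starting point and is a
superdifferential of `v`. Since the Euler–Lagrange equation determines a curve from these first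
variations, distinct minimizers have distinct superdifferentials. Finally, `v(x)` is finite unless
some pair of bodies of `x` is aligned with the corresponding pair of `a`, which happens only on
finitely many proper subspaces. -/

/-! ### Truncated Cauchy laws -/

section CauchyLaw

variable {F : Type*} [NormedAddCommGroup F]

lemma lintegral_exp_neg_mul_sq {b : ℝ} (hb : 0 < b) :
    ∫⁻ t : ℝ, ENNReal.ofReal (exp (-b * t ^ 2)) = ENNReal.ofReal √(π / b) := by
  rw [← integral_gaussian, ofReal_integral_eq_lintegral_ofReal (integrable_exp_neg_mul_sq hb)]
  exact ae_of_all _ fun _ => (exp_pos _).le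

lemma setLIntegral_Ioi_mul_exp_neg_mul_sq {b : ℝ} (hb : 0 < b) :
    ∫⁻ q in Ioi (0 : ℝ), ENNReal.ofReal (q * exp (-b * q ^ 2)) = ENNReal.ofReal (2 * b)⁻¹ := by
  have hval : ∫ q in Ioi (0 : ℝ), q * exp (-b * q ^ 2) = (2 * b)⁻¹ := by
    have := integral_mul_cexp_neg_mul_sq (b := b) (by simpa using hb)
    exact_mod_cast this
  rw [← hval, ofReal_integral_eq_lintegral_ofReal (integrable_mul_exp_neg_mul_sq hb).integrableOn]
  filter_upwards [ae_restrict_mem measurableSet_Ioi] with q hq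
  exact mul_nonneg (le_of_lt hq) (exp_pos _).le

lemma lintegral_inv_one_add_mul_sq {k : ℝ} (hk : 0 < k) :
    ∫⁻ t : ℝ, ENNReal.ofReal (1 + k * t ^ 2)⁻¹ = ENNReal.ofReal (π / √k) := by
  have hs : 0 < √k := Real.sqrt_pos.2 hk
  have hsq (t : ℝ) : (1 + k * t ^ 2)⁻¹ = (1 + (√k * t) ^ 2)⁻¹ := by
    rw [mul_pow, Real.sq_sqrt hk.le]
  simp_rw [hsq]
  rw [← ofReal_integral_eq_lintegral_ofReal (integrable_inv_one_add_sq.comp_mul_left' hs.ne')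
      (ae_of_all _ fun _ => by positivity),
    Measure.integral_comp_mul_left (fun t : ℝ => (1 + t ^ 2)⁻¹), integral_univ_inv_one_add_sq,
    abs_of_pos (by positivity), smul_eq_mul, inv_mul_eq_div]

lemma enorm_inv_eq_lintegral_exp (y : F) :
    ‖y‖ₑ⁻¹ = ENNReal.ofReal (√π)⁻¹ * ∫⁻ t : ℝ, ENNReal.ofReal (exp (-(t ^ 2 * ‖y‖ ^ 2))) := by
  rcases eq_or_ne y 0 with rfl | hy
  · simp [ENNReal.mul_top, Real.sqrt_pos.2 pi_pos]
  · have hy' : 0 < ‖y‖ := norm_pos_iff.2 hy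
    have hcomm (t : ℝ) : -(t ^ 2 * ‖y‖ ^ 2) = -‖y‖ ^ 2 * t ^ 2 := by ring
    simp_rw [hcomm]
    rw [lintegral_exp_neg_mul_sq (by positivity), ← ENNReal.ofReal_mul (by positivity),
      Real.sqrt_div pi_pos.le, Real.sqrt_sq hy'.le, ← ofReal_norm, ← ENNReal.ofReal_inv_of_pos hy']
    congr 1
    field_simp

variable [InnerProductSpace ℝ F] [FiniteDimensional ℝ F] [MeasurableSpace F] [BorelSpace F]

lemma lintegral_exp_neg_mul_norm_sq {b : ℝ} (hb : 0 < b) :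
    ∫⁻ v : F, ENNReal.ofReal (exp (-b * ‖v‖ ^ 2)) =
      ENNReal.ofReal ((π / b) ^ (Module.finrank ℝ F / 2 : ℝ)) := by
  have hval := GaussianFourier.integral_rexp_neg_mul_sq_norm (V := F) hb
  have hint : Integrable fun v : F => exp (-b * ‖v‖ ^ 2) :=
    .of_integral_ne_zero (by rw [hval]; positivity)
  rw [← hval, ofReal_integral_eq_lintegral_ofReal hint (ae_of_all _ fun _ => (exp_pos _).le)]

variable (F) in
/-- The centred Gaussian law with density proportional to `exp (-‖g‖²)`; this normalization
makes the mixture in `truncCauchy` the Cauchy law. -/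
def gaussLaw : Measure F :=
  volume.withDensity fun g =>
    ENNReal.ofReal (π ^ (-(Module.finrank ℝ F / 2 : ℝ))) * ENNReal.ofReal (exp (-‖g‖ ^ 2))

lemma lintegral_gaussLaw {f : F → ℝ≥0∞} (hf : Measurable f) :
    ∫⁻ g, f g ∂gaussLaw F = ENNReal.ofReal (π ^ (-(Module.finrank ℝ F / 2 : ℝ))) *
      ∫⁻ g, ENNReal.ofReal (exp (-‖g‖ ^ 2)) * f g := by
  rw [gaussLaw, lintegral_withDensity_eq_lintegral_mul _ (by fun_prop) hf,
    ← lintegral_const_mul _ (by fun_prop)]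
  simp only [Pi.mul_apply, mul_assoc]

instance : IsProbabilityMeasure (gaussLaw F) where
  measure_univ := by
    have hone (g : F) : -‖g‖ ^ 2 = -1 * ‖g‖ ^ 2 := by ring
    rw [← lintegral_one, lintegral_gaussLaw measurable_const]
    simp_rw [mul_one, hone]
    rw [lintegral_exp_neg_mul_norm_sq one_pos, div_one, ← ENNReal.ofReal_mul (by positivity),
      ← Real.rpow_add pi_pos, neg_add_cancel, Real.rpow_zero, ENNReal.ofReal_one]

lemma lintegral_comp_neg_gaussLaw {f : F → ℝ≥0∞} (hf : Measurable f) :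
    ∫⁻ g, f (-g) ∂gaussLaw F = ∫⁻ g, f g ∂gaussLaw F := by
  rw [lintegral_gaussLaw hf, lintegral_gaussLaw (by fun_prop), ← lintegral_neg_eq_self]
  simp only [norm_neg, neg_neg]

lemma lintegral_enorm_sq_gaussLaw_ne_top : ∫⁻ g, ‖g‖ₑ ^ 2 ∂gaussLaw F ≠ ⊤ := by
  have hdom (g : F) : ENNReal.ofReal (exp (-‖g‖ ^ 2)) * ‖g‖ₑ ^ 2 ≤
      2 * ENNReal.ofReal (exp (-(1 / 2) * ‖g‖ ^ 2)) := by
    rw [← ofReal_norm, ← ENNReal.ofReal_pow (norm_nonneg _), ← ENNReal.ofReal_mul (exp_pos _).le,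
      ← ENNReal.ofReal_ofNat 2, ← ENNReal.ofReal_mul zero_le_two]
    refine ENNReal.ofReal_le_ofReal ?_
    have hsplit : exp (-(1 / 2) * ‖g‖ ^ 2) = exp (-‖g‖ ^ 2) * exp (‖g‖ ^ 2 / 2) := by
      rw [← Real.exp_add]; congr 1; ring
    nlinarith [exp_pos (-‖g‖ ^ 2), Real.add_one_le_exp (‖g‖ ^ 2 / 2)]
  rw [lintegral_gaussLaw (by fun_prop)]
  refine ENNReal.mul_ne_top ENNReal.ofReal_ne_top (ne_top_of_le_ne_top ?_ (lintegral_mono hdom))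
  rw [lintegral_const_mul _ (by fun_prop), lintegral_exp_neg_mul_norm_sq (by norm_num)]
  exact ENNReal.mul_ne_top (by simp) ENNReal.ofReal_ne_top

-- Completing the square: with `w = (c t² / (1 + c² t²)) v`,
-- `‖g‖² + t² ‖v + c g‖² = (1 + c² t²) ‖g + w‖² + t² / (1 + c² t²) ‖v‖²`.
lemma lintegral_exp_neg_sq_mul_gaussLaw_le (hF : 2 ≤ Module.finrank ℝ F) (c t : ℝ) (v : F) :
    ∫⁻ g, ENNReal.ofReal (exp (-(t ^ 2 * ‖v + c • g‖ ^ 2))) ∂gaussLaw F ≤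
      ENNReal.ofReal
        ((1 + c ^ 2 * t ^ 2)⁻¹ * exp (-(t ^ 2 / (1 + c ^ 2 * t ^ 2) * ‖v‖ ^ 2))) := by
  set B : ℝ := 1 + c ^ 2 * t ^ 2 with hB
  set w : F := (c * t ^ 2 / B) • v with hw
  have hB1 : 1 ≤ B := le_add_of_nonneg_right (by positivity)
  have hB0 : 0 < B := one_pos.trans_le hB1
  have hsquare (g : F) : ENNReal.ofReal (exp (-‖g‖ ^ 2)) *
      ENNReal.ofReal (exp (-(t ^ 2 * ‖v + c • g‖ ^ 2))) =
      ENNReal.ofReal (exp (-(t ^ 2 / B * ‖v‖ ^ 2))) *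
        ENNReal.ofReal (exp (-B * ‖g + w‖ ^ 2)) := by
    rw [← ENNReal.ofReal_mul (exp_pos _).le, ← ENNReal.ofReal_mul (exp_pos _).le,
      ← Real.exp_add, ← Real.exp_add, norm_add_sq_real, norm_add_sq_real, hw, norm_smul,
      norm_smul, inner_smul_right, inner_smul_right, real_inner_comm v g, mul_pow, mul_pow,
      Real.norm_eq_abs, Real.norm_eq_abs, sq_abs, sq_abs]
    congr 2
    field_simp
    rw [hB]
    ring
  have hdim : B ≤ B ^ (Module.finrank ℝ F / 2 : ℝ) := by
    refine Real.self_le_rpow_of_one_le hB1 ?_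
    rw [le_div_iff₀ two_pos, one_mul]
    exact_mod_cast hF
  rw [lintegral_gaussLaw (by fun_prop)]
  simp_rw [hsquare]
  rw [lintegral_const_mul _ (by fun_prop),
    lintegral_add_right_eq_self (fun g : F => ENNReal.ofReal (exp (-B * ‖g‖ ^ 2))) w,
    lintegral_exp_neg_mul_norm_sq hB0, ← ENNReal.ofReal_mul (exp_pos _).le,
    ← ENNReal.ofReal_mul (by positivity), Real.div_rpow pi_pos.le hB0.le, Real.rpow_neg pi_pos.le]
  refine ENNReal.ofReal_le_ofReal ?_
  calc _ = (B ^ (Module.finrank ℝ F / 2 : ℝ))⁻¹ * exp (-(t ^ 2 / B * ‖v‖ ^ 2)) := by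
        field_simp
    _ ≤ _ := by gcongr

lemma lintegral_enorm_inv_gaussLaw_le (hF : 2 ≤ Module.finrank ℝ F) (c : ℝ) (v : F) :
    ∫⁻ g, ‖v + c • g‖ₑ⁻¹ ∂gaussLaw F ≤ ENNReal.ofReal (√π)⁻¹ * ∫⁻ t : ℝ, ENNReal.ofReal
      ((1 + c ^ 2 * t ^ 2)⁻¹ * exp (-(t ^ 2 / (1 + c ^ 2 * t ^ 2) * ‖v‖ ^ 2))) := by
  simp_rw [enorm_inv_eq_lintegral_exp]
  rw [lintegral_const_mul' _ _ ENNReal.ofReal_ne_top, lintegral_lintegral_swap (by fun_prop)]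
  gcongr with t
  exact lintegral_exp_neg_sq_mul_gaussLaw_le hF c t v

/-- The half-normal law on `(0, ∞)`, with density `2 / √π * exp (-q²)`. -/
def halfNormal : Measure ℝ :=
  (volume.restrict (Ioi 0)).withDensity fun q => ENNReal.ofReal (2 / √π * exp (-q ^ 2))

lemma lintegral_halfNormal {f : ℝ → ℝ≥0∞} (hf : Measurable f) :
    ∫⁻ q, f q ∂halfNormal =
      ∫⁻ q in Ioi 0, ENNReal.ofReal (2 / √π * exp (-q ^ 2)) * f q :=
  lintegral_withDensity_eq_lintegral_mul _ (by fun_prop) hf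

lemma halfNormal_le_smul_volume :
    halfNormal ≤ ENNReal.ofReal (2 / √π) • volume.restrict (Ioi 0) := by
  rw [halfNormal, ← withDensity_const]
  refine withDensity_mono (ae_of_all _ fun q => ENNReal.ofReal_le_ofReal ?_)
  exact mul_le_of_le_one_right (by positivity) (Real.exp_le_one_iff.2 (by nlinarith))

instance : IsProbabilityMeasure halfNormal where
  measure_univ := by
    have hval : ∫ q in Ioi (0 : ℝ), 2 / √π * exp (-q ^ 2) = 1 := by
      have h := integral_gaussian_Ioi 1
      simp only [neg_one_mul, div_one] at h
      rw [integral_const_mul, h]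
      field_simp
    rw [halfNormal, withDensity_apply _ .univ, Measure.restrict_univ,
      ← ofReal_integral_eq_lintegral_ofReal (.of_integral_ne_zero (by simp [hval]))
        (ae_of_all _ fun _ => by positivity), hval, ENNReal.ofReal_one]

lemma halfNormal_Iio_le (z : ℝ) : halfNormal (Iio z) ≤ ENNReal.ofReal (2 / √π * z) := by
  refine (halfNormal_le_smul_volume _).trans (le_of_eq ?_)
  rw [Measure.smul_apply, Measure.restrict_apply measurableSet_Iio, inter_comm, Ioi_inter_Iio,
    Real.volume_Ioo, sub_zero, smul_eq_mul, ENNReal.ofReal_mul (by positivity)]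

lemma setLIntegral_inv_sq_halfNormal_le {z : ℝ} (hz : 0 < z) :
    ∫⁻ q in Ici z, ENNReal.ofReal (q ^ 2)⁻¹ ∂halfNormal ≤ ENNReal.ofReal (2 / √π * z⁻¹) := by
  have hval : ∫⁻ q in Ici z, ENNReal.ofReal (q ^ 2)⁻¹ = ENNReal.ofReal z⁻¹ := by
    have hrpow (q : ℝ) : (q ^ 2)⁻¹ = q ^ (-2 : ℝ) := by norm_cast
    simp_rw [hrpow]
    rw [setLIntegral_congr Ioi_ae_eq_Ici.symm, ← ofReal_integral_eq_lintegral_ofReal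
        (integrableOn_Ioi_rpow_of_lt (by norm_num) hz), integral_Ioi_rpow_of_lt (by norm_num) hz]
    · norm_num [Real.rpow_neg_one]
    · filter_upwards [ae_restrict_mem measurableSet_Ioi] with q hq
      exact Real.rpow_nonneg (hz.trans hq).le _
  calc ∫⁻ q in Ici z, ENNReal.ofReal (q ^ 2)⁻¹ ∂halfNormal
      ≤ ∫⁻ q in Ici z, ENNReal.ofReal (q ^ 2)⁻¹ ∂(ENNReal.ofReal (2 / √π) • volume) :=
        lintegral_mono' (Measure.restrict_mono' (Eventually.of_forall fun _ h => h)
          (halfNormal_le_smul_volume.trans (by gcongr; exact Measure.restrict_le_self))) le_rfl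
    _ = ENNReal.ofReal (2 / √π * z⁻¹) := by
        rw [Measure.restrict_smul, lintegral_smul_measure, hval, smul_eq_mul,
          ENNReal.ofReal_mul (by positivity)]

lemma lintegral_halfNormal_mul_exp {b : ℝ} (hb : 0 ≤ b) :
    ∫⁻ q, ENNReal.ofReal (q * exp (-(b * q ^ 2))) ∂halfNormal =
      ENNReal.ofReal ((√π)⁻¹ * (1 + b)⁻¹) := by
  have hmerge (q : ℝ) : ENNReal.ofReal (2 / √π * exp (-q ^ 2)) *
      ENNReal.ofReal (q * exp (-(b * q ^ 2))) =
      ENNReal.ofReal (2 / √π) * ENNReal.ofReal (q * exp (-(1 + b) * q ^ 2)) := by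
    rw [← ENNReal.ofReal_mul (by positivity), ← ENNReal.ofReal_mul (by positivity),
      show -(1 + b) * q ^ 2 = -q ^ 2 + -(b * q ^ 2) by ring, Real.exp_add]
    congr 1
    ring
  rw [lintegral_halfNormal (by fun_prop), lintegral_congr hmerge,
    lintegral_const_mul _ (by fun_prop), setLIntegral_Ioi_mul_exp_neg_mul_sq (by positivity),
    ← ENNReal.ofReal_mul (by positivity)]
  congr 1
  field_simp

lemma lintegral_enorm_inv_gaussLaw_div_le (hF : 2 ≤ Module.finrank ℝ F) (c : ℝ) (x : F) {q : ℝ}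
    (hq : 0 < q) :
    ∫⁻ g, ‖x + (c * q⁻¹) • g‖ₑ⁻¹ ∂gaussLaw F ≤
      ENNReal.ofReal (√π)⁻¹ * ∫⁻ t : ℝ, ENNReal.ofReal (1 + c ^ 2 * t ^ 2)⁻¹ *
        ENNReal.ofReal (q * exp (-(t ^ 2 / (1 + c ^ 2 * t ^ 2) * ‖x‖ ^ 2 * q ^ 2))) := by
  have hscale (g : F) : ‖x + (c * q⁻¹) • g‖ₑ⁻¹ = ENNReal.ofReal q * ‖q • x + c • g‖ₑ⁻¹ := by
    have hxg : x + (c * q⁻¹) • g = q⁻¹ • (q • x + c • g) := by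
      rw [smul_add, inv_smul_smul₀ hq.ne', smul_smul, mul_comm]
    rw [hxg, enorm_smul, Real.enorm_of_nonneg (inv_nonneg.2 hq.le), ENNReal.ofReal_inv_of_pos hq,
      ENNReal.mul_inv (by simp) (by simp [hq]), inv_inv]
  simp_rw [hscale]
  rw [lintegral_const_mul' _ _ ENNReal.ofReal_ne_top]
  refine (mul_le_mul_right (lintegral_enorm_inv_gaussLaw_le hF c (q • x)) _).trans (le_of_eq ?_)
  rw [mul_left_comm, ← lintegral_const_mul _ (by fun_prop)]
  congr 1
  refine lintegral_congr fun t => ?_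
  rw [← ENNReal.ofReal_mul hq.le, ← ENNReal.ofReal_mul (by positivity), norm_smul,
    Real.norm_of_nonneg hq.le]
  ring_nf

-- The mixture `c g / q` has the Cauchy law, the Poisson kernel of the half space at height `c`;
-- when `dim F = 2` the Newtonian kernel is harmonic in the half space and equality holds.
lemma lintegral_enorm_inv_cauchy_le (hF : 2 ≤ Module.finrank ℝ F) (c : ℝ) (x : F) :
    ∫⁻ q, ∫⁻ g, ‖x + (c * q⁻¹) • g‖ₑ⁻¹ ∂gaussLaw F ∂halfNormal ≤
      (ENNReal.ofReal √(‖x‖ ^ 2 + c ^ 2))⁻¹ := by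
  set k : ℝ := ‖x‖ ^ 2 + c ^ 2 with hk
  rcases (show 0 ≤ k by positivity).eq_or_lt with hk0 | hk0
  · simp [← hk0]
  have hgauss : ∀ᵐ q ∂halfNormal, ∫⁻ g, ‖x + (c * q⁻¹) • g‖ₑ⁻¹ ∂gaussLaw F ≤ _ :=
    (withDensity_absolutelyContinuous _ _).ae_le <|
      (ae_restrict_mem measurableSet_Ioi).mono fun q hq =>
        lintegral_enorm_inv_gaussLaw_div_le hF c x hq
  have hmix (t : ℝ) : ENNReal.ofReal (1 + c ^ 2 * t ^ 2)⁻¹ *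
      ENNReal.ofReal ((√π)⁻¹ * (1 + t ^ 2 / (1 + c ^ 2 * t ^ 2) * ‖x‖ ^ 2)⁻¹) =
      ENNReal.ofReal (√π)⁻¹ * ENNReal.ofReal (1 + k * t ^ 2)⁻¹ := by
    rw [← ENNReal.ofReal_mul (by positivity), ← ENNReal.ofReal_mul (by positivity), hk]
    congr 1
    field_simp
    ring
  refine (lintegral_mono_ae hgauss).trans (le_of_eq ?_)
  rw [lintegral_const_mul' _ _ ENNReal.ofReal_ne_top, lintegral_lintegral_swap (by fun_prop)]
  simp_rw [lintegral_const_mul' _ _ ENNReal.ofReal_ne_top]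
  rw [lintegral_congr fun t => by rw [lintegral_halfNormal_mul_exp (by positivity), hmix t],
    lintegral_const_mul' _ _ ENNReal.ofReal_ne_top, lintegral_inv_one_add_mul_sq hk0,
    ← ENNReal.ofReal_mul (by positivity), ← ENNReal.ofReal_mul (by positivity),
    ← ENNReal.ofReal_inv_of_pos (by positivity)]
  congr 1
  field_simp
  exact (Real.sq_sqrt pi_pos.le).symm

variable (F) in
/-- The truncated Cauchy law at scale `z`: the law of `z g / q` for independent `g` Gaussian and
`q` half-normal, restricted to the event `q ≥ z` in order to have a finite second moment. -/
def truncCauchy (z : ℝ) : Measure F :=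
  ((halfNormal.restrict (Ici z)).prod (gaussLaw F)).map fun p => (z * p.1⁻¹) • p.2

lemma lintegral_truncCauchy (z : ℝ) {f : F → ℝ≥0∞} (hf : Measurable f) :
    ∫⁻ s, f s ∂truncCauchy F z =
      ∫⁻ q in Ici z, ∫⁻ g, f ((z * q⁻¹) • g) ∂gaussLaw F ∂halfNormal := by
  rw [truncCauchy, lintegral_map hf (by fun_prop), lintegral_prod _ (by fun_prop)]

lemma truncCauchy_univ (z : ℝ) : truncCauchy F z univ = halfNormal (Ici z) := by
  simpa using lintegral_truncCauchy (F := F) z (f := 1) measurable_one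

lemma truncCauchy_univ_le_one (z : ℝ) : truncCauchy F z univ ≤ 1 :=
  (truncCauchy_univ z).trans_le prob_le_one

instance (z : ℝ) : IsFiniteMeasure (truncCauchy F z) :=
  ⟨(truncCauchy_univ_le_one z).trans_lt ENNReal.one_lt_top⟩

lemma one_le_truncCauchy_univ_add (z : ℝ) :
    1 ≤ truncCauchy F z univ + ENNReal.ofReal (2 / √π * z) := by
  rw [truncCauchy_univ]
  calc (1 : ℝ≥0∞) = halfNormal (Ici z ∪ Iio z) := by rw [union_comm, Iio_union_Ici, measure_univ]
    _ ≤ halfNormal (Ici z) + halfNormal (Iio z) := measure_union_le _ _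
    _ ≤ _ := by gcongr; exact halfNormal_Iio_le z

lemma lintegral_comp_neg_truncCauchy (z : ℝ) {f : F → ℝ≥0∞} (hf : Measurable f) :
    ∫⁻ s, f (-s) ∂truncCauchy F z = ∫⁻ s, f s ∂truncCauchy F z := by
  rw [lintegral_truncCauchy z hf, lintegral_truncCauchy z (by fun_prop)]
  refine lintegral_congr fun q => ?_
  rw [← lintegral_comp_neg_gaussLaw (by fun_prop)]
  simp only [smul_neg, neg_neg]

lemma lintegral_enorm_sq_truncCauchy_le {z : ℝ} (hz : 0 < z) :
    ∫⁻ s, ‖s‖ₑ ^ 2 ∂truncCauchy F z ≤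
      ENNReal.ofReal (2 / √π * z) * ∫⁻ g, ‖g‖ₑ ^ 2 ∂gaussLaw F := by
  have hscale (q : ℝ) : ∫⁻ g : F, ‖(z * q⁻¹) • g‖ₑ ^ 2 ∂gaussLaw F =
      ENNReal.ofReal (q ^ 2)⁻¹ *
        (ENNReal.ofReal (z ^ 2) * ∫⁻ g, ‖g‖ₑ ^ 2 ∂gaussLaw F) := by
    simp_rw [enorm_smul, mul_pow]
    rw [lintegral_const_mul _ (by fun_prop), ← mul_assoc, ← ENNReal.ofReal_mul (by positivity),
      Real.enorm_eq_ofReal_abs, ← ENNReal.ofReal_pow (abs_nonneg _), sq_abs, mul_pow, inv_pow,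
      mul_comm (z ^ 2)]
  rw [lintegral_truncCauchy z (by fun_prop)]
  simp_rw [hscale]
  rw [lintegral_mul_const _ (by fun_prop), ← mul_assoc]
  gcongr
  refine (mul_le_mul_left (setLIntegral_inv_sq_halfNormal_le hz) _).trans (le_of_eq ?_)
  rw [← ENNReal.ofReal_mul (by positivity)]
  congr 1
  field_simp

lemma lintegral_enorm_inv_truncCauchy_le (hF : 2 ≤ Module.finrank ℝ F) (x : F) (h z : ℝ) :
    ∫⁻ s, ‖x + h • s‖ₑ⁻¹ ∂truncCauchy F z ≤ (ENNReal.ofReal √(‖x‖ ^ 2 + (h * z) ^ 2))⁻¹ := by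
  rw [lintegral_truncCauchy z (by fun_prop)]
  simp_rw [smul_smul, ← mul_assoc]
  exact (setLIntegral_le_lintegral _ _).trans (lintegral_enorm_inv_cauchy_le hF (h * z) x)

end CauchyLaw

/-! ### Countable rectifiability -/

section Rectifiability

variable {E E' : Type*} {k : ℕ}

/-- `S` is covered by countably many Lipschitz images of `ℝ^k`, that is, `S` is countably
`k`-rectifiable with empty exceptional null set. -/
def LipCovered [PseudoMetricSpace E] (k : ℕ) (S : Set E) : Prop :=
  ∃ f : ℕ → EuclideanSpace ℝ (Fin k) → E,
    (∀ i, ∃ K : NNReal, LipschitzWith K (f i)) ∧ S ⊆ ⋃ i, range (f i)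

lemma LipCovered.mono [PseudoMetricSpace E] {S S' : Set E} (h : LipCovered k S) (hS : S' ⊆ S) :
    LipCovered k S' :=
  let ⟨f, hf, hs⟩ := h
  ⟨f, hf, hS.trans hs⟩

lemma LipCovered.of_subset_range [PseudoMetricSpace E] {S : Set E}
    {f : EuclideanSpace ℝ (Fin k) → E} {K : NNReal} (hf : LipschitzWith K f) (hS : S ⊆ range f) :
    LipCovered k S :=
  ⟨fun _ => f, fun _ => ⟨K, hf⟩, hS.trans (subset_iUnion (fun _ : ℕ => range f) 0)⟩

lemma LipCovered.empty [PseudoMetricSpace E] [Nonempty E] : LipCovered k (∅ : Set E) :=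
  .of_subset_range (LipschitzWith.const (Classical.arbitrary E)) (empty_subset _)

lemma LipCovered.image [PseudoMetricSpace E] [PseudoMetricSpace E'] {S : Set E}
    (h : LipCovered k S) {g : E → E'} {K : NNReal} (hg : LipschitzWith K g) :
    LipCovered k (g '' S) := by
  obtain ⟨f, hf, hs⟩ := h
  refine ⟨fun i => g ∘ f i, fun i => (hf i).imp' (K * ·) fun _ => hg.comp, ?_⟩
  simp_rw [range_comp, ← image_iUnion]
  exact image_mono hs

lemma LipCovered.iUnion [PseudoMetricSpace E] [Nonempty E] {ι : Type*} [Countable ι]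
    {S : ι → Set E} (h : ∀ i, LipCovered k (S i)) : LipCovered k (⋃ i, S i) := by
  rcases isEmpty_or_nonempty ι with _ | _
  · simpa using LipCovered.empty
  choose f hf hs using h
  obtain ⟨e, he⟩ := exists_surjective_nat (ι × ℕ)
  refine ⟨fun n => f (e n).1 (e n).2, fun n => hf _ _, iUnion_subset fun i x hx => ?_⟩
  obtain ⟨j, hj⟩ := mem_iUnion.1 (hs i hx)
  obtain ⟨n, hn⟩ := he (i, j)
  exact mem_iUnion.2 ⟨n, by simpa only [hn] using hj⟩

lemma LipCovered.union [PseudoMetricSpace E] [Nonempty E] {S S' : Set E} (h : LipCovered k S)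
    (h' : LipCovered k S') : LipCovered k (S ∪ S') := by
  rw [union_eq_iUnion]
  exact .iUnion fun b => by cases b <;> assumption

lemma lipCovered_submodule [NormedAddCommGroup E] [NormedSpace ℝ E]
    (W : Submodule ℝ E) [FiniteDimensional ℝ W] (hW : Module.finrank ℝ W ≤ k) :
    LipCovered k (W : Set E) := by
  obtain ⟨i, hi⟩ := (finrank_le_iff_exists_linearMap (R := ℝ) (M := W)
    (M' := EuclideanSpace ℝ (Fin k))).1 (by simpa using hW)
  obtain ⟨f, hf⟩ := i.exists_leftInverse_of_injective (LinearMap.ker_eq_bot.2 hi)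
  refine .of_subset_range (W.subtypeL.comp (LinearMap.toContinuousLinearMap f)).lipschitz
    fun x hx => ⟨i ⟨x, hx⟩, ?_⟩
  simpa using congrArg Subtype.val (LinearMap.congr_fun hf ⟨x, hx⟩)

lemma LipCovered.of_antilipschitzWith_domRestrict [NormedAddCommGroup E] [NormedSpace ℝ E]
    [FiniteDimensional ℝ E] {S : Set E} {f : E → EuclideanSpace ℝ (Fin k)} {K : NNReal}
    (hf : AntilipschitzWith K (S.domRestrict f)) : LipCovered k S := by
  have hinj : InjOn f S := injOn_iff_injective.2 hf.injective
  have hlip : LipschitzOnWith K (Function.invFunOn f S) (f '' S) :=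
    lipschitzOnWith_iff_restrict.2 <| hf.to_rightInvOn'
      (surjOn_image f S).mapsTo_invFunOn (surjOn_image f S).rightInvOn_invFunOn
  obtain ⟨g, hg, hgS⟩ := hlip.extend_finite_dimension
  refine .of_subset_range hg fun x hx => ⟨f x, ?_⟩
  rw [← hgS (mem_image_of_mem f hx), hinj.leftInvOn_invFunOn hx]

variable [NormedAddCommGroup E] [InnerProductSpace ℝ E]

lemma norm_le_two_mul_norm_orthogonalProjectionOnto {Q v : E}
    (h : |⟪Q, v⟫| ≤ ‖Q‖ / 2 * ‖v‖) : ‖v‖ ≤ 2 * ‖(ℝ ∙ Q)ᗮ.orthogonalProjectionOnto v‖ := by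
  have hpyth := Submodule.norm_sq_eq_add_norm_sq_projection v (ℝ ∙ Q)
  have hproj : ‖(ℝ ∙ Q).orthogonalProjectionOnto v‖ ≤ ‖v‖ / 2 := by
    rcases eq_or_ne Q 0 with rfl | hQ
    · simp only [Submodule.coe_norm, Submodule.coe_orthogonalProjectionOnto_apply,
        Submodule.starProjection_singleton, smul_zero, norm_zero]
      positivity
    have hQ' : 0 < ‖Q‖ := norm_pos_iff.2 hQ
    have hval : ‖(ℝ ∙ Q).orthogonalProjectionOnto v‖ = |⟪Q, v⟫| / ‖Q‖ := by
      rw [Submodule.coe_norm, Submodule.coe_orthogonalProjectionOnto_apply,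
        Submodule.starProjection_singleton, norm_smul, norm_div]
      simp only [RCLike.ofReal_real_eq_id, id_eq, norm_pow, Real.norm_eq_abs, abs_norm]
      field_simp
    rw [hval, div_le_iff₀ hQ']
    linarith
  nlinarith [norm_nonneg v, norm_nonneg ((ℝ ∙ Q)ᗮ.orthogonalProjectionOnto v),
    norm_nonneg ((ℝ ∙ Q).orthogonalProjectionOnto v)]

lemma lipCovered_of_cone (hk : Module.finrank ℝ E = k + 1) {S : Set E} {Q : E} (hQ : Q ≠ 0)
    (hS : ∀ x ∈ S, ∀ y ∈ S, |⟪Q, y - x⟫| ≤ ‖Q‖ / 2 * ‖y - x‖) : LipCovered k S := by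
  have : Fact (Module.finrank ℝ E = k + 1) := ⟨hk⟩
  have : FiniteDimensional ℝ E := Module.finite_of_finrank_eq_succ hk
  let B := OrthonormalBasis.fromOrthogonalSpanSingleton k (𝕜 := ℝ) hQ
  refine .of_antilipschitzWith_domRestrict (K := 2)
    (f := fun x => B.repr ((ℝ ∙ Q)ᗮ.orthogonalProjectionOnto x)) (.of_le_mul_dist fun x y => ?_)
  rw [Subtype.dist_eq, dist_eq_norm, domRestrict_apply, domRestrict_apply,
    LinearIsometryEquiv.dist_map, dist_eq_norm, ← map_sub]
  exact norm_le_two_mul_norm_orthogonalProjectionOnto (hS y y.2 x x.2)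

/-- `p` is a superdifferential of `V` at `x` relative to `S`: up to `o(‖y - x‖)`, the affine
function of slope `p` touching `V` at `x` lies above `V` on `S`. -/
def HasSuperdiffWithinAt (V : E → ℝ) (p : E) (S : Set E) (x : E) : Prop :=
  ∀ ε > 0, ∀ᶠ y in 𝓝[S] x, V y ≤ V x + ⟪p, y - x⟫ + ε * ‖y - x‖

lemma HasSuperdiffWithinAt.eventually_le {V : E → ℝ} {p q x : E} {S : Set E} {ε : ℝ}
    (h : HasSuperdiffWithinAt V p S x) (hq : ‖p - q‖ < ε) :
    ∀ᶠ y in 𝓝[S] x, V y ≤ V x + ⟪q, y - x⟫ + ε * ‖y - x‖ := by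
  filter_upwards [h (ε - ‖p - q‖) (sub_pos.2 hq)] with y hy
  have hpq := real_inner_le_norm (p - q) (y - x)
  rw [inner_sub_left] at hpq
  linarith

-- Adding the upper bounds of slope `q₁` at `x` and of slope `q₂` at `y` cancels `V`.
lemma lipCovered_of_two_slopes (hk : Module.finrank ℝ E = k + 1) {V : E → ℝ} {S : Set E}
    {q₁ q₂ : E} (hq : q₁ ≠ q₂)
    (h₁ : ∀ x ∈ S, ∀ y ∈ S, V y ≤ V x + ⟪q₁, y - x⟫ + ‖q₁ - q₂‖ / 4 * ‖y - x‖)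
    (h₂ : ∀ x ∈ S, ∀ y ∈ S, V y ≤ V x + ⟪q₂, y - x⟫ + ‖q₁ - q₂‖ / 4 * ‖y - x‖) :
    LipCovered k S := by
  refine lipCovered_of_cone hk (sub_ne_zero.2 hq) fun x hx y hy => ?_
  have h₁' := h₁ y hy x hx
  have h₂' := h₂ y hy x hx
  rw [← neg_sub y x, inner_neg_right, norm_neg] at h₁' h₂'
  rw [inner_sub_left, abs_le]
  constructor <;> linarith [h₁ x hx y hy, h₂ x hx y hy]

lemma lipCovered_of_two_superdifferentials (hk : Module.finrank ℝ E = k + 1) {S : Set E}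
    (V : E → ℝ) (hS : ∀ x ∈ S, ∃ p₁ p₂ : E, p₁ ≠ p₂ ∧
      HasSuperdiffWithinAt V p₁ S x ∧ HasSuperdiffWithinAt V p₂ S x) :
    LipCovered k S := by
  have : FiniteDimensional ℝ E := Module.finite_of_finrank_eq_succ hk
  have : ProperSpace E := FiniteDimensional.proper_real E
  let D := TopologicalSpace.denseSeq E
  let piece : (ℕ × ℕ) × TopologicalSpace.countableBasis E → Set E := fun α =>
    {x ∈ S ∩ α.2 | D α.1.1 ≠ D α.1.2 ∧ ∀ y ∈ S ∩ α.2, ∀ q ∈ ({D α.1.1, D α.1.2} : Set E),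
      V y ≤ V x + ⟪q, y - x⟫ + ‖D α.1.1 - D α.1.2‖ / 4 * ‖y - x‖}
  have hcover : S ⊆ ⋃ α, piece α := by
    intro x hx
    obtain ⟨p₁, p₂, hp, h₁, h₂⟩ := hS x hx
    obtain ⟨⟨i, j⟩, hij, hi, hj⟩ : ∃ ij : ℕ × ℕ, D ij.1 ≠ D ij.2 ∧
        ‖p₁ - D ij.1‖ < ‖D ij.1 - D ij.2‖ / 4 ∧ ‖p₂ - D ij.2‖ < ‖D ij.1 - D ij.2‖ / 4 := by
      have hdense := TopologicalSpace.denseRange_denseSeq E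
      refine (hdense.prodMap hdense).exists_mem_open (s := {q : E × E | q.1 ≠ q.2 ∧
        ‖p₁ - q.1‖ < ‖q.1 - q.2‖ / 4 ∧ ‖p₂ - q.2‖ < ‖q.1 - q.2‖ / 4}) ?_ ⟨(p₁, p₂), hp, ?_⟩
      · exact (isOpen_ne_fun continuous_fst continuous_snd).and
          ((isOpen_lt (by fun_prop) (by fun_prop)).and (isOpen_lt (by fun_prop) (by fun_prop)))
      · simpa [sub_eq_zero] using hp
    obtain ⟨u, hu, huS⟩ := mem_nhdsWithin_iff_exists_mem_nhds_inter.1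
      ((h₁.eventually_le hi).and (h₂.eventually_le hj))
    obtain ⟨c, hc, hxc, hcu⟩ :=
      (TopologicalSpace.isBasis_countableBasis E).mem_nhds_iff.1 hu
    refine mem_iUnion.2 ⟨((i, j), ⟨c, hc⟩), ⟨hx, hxc⟩, hij, fun y hy q hq => ?_⟩
    rcases hq with rfl | rfl
    exacts [(huS ⟨hcu hy.2, hy.1⟩).1, (huS ⟨hcu hy.2, hy.1⟩).2]
  refine (LipCovered.iUnion fun α => ?_).mono hcover
  rcases (piece α).eq_empty_or_nonempty with hα | ⟨x₀, hx₀⟩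
  · exact hα ▸ .empty
  · exact lipCovered_of_two_slopes hk hx₀.2.1 (fun x hx y hy => hx.2.2 y hy.1 _ (.inl rfl))
      fun x hx y hy => hx.2.2 y hy.1 _ (.inr rfl)

end Rectifiability

/-! ### The mass inner product and the Newtonian potential -/

section MassInner

variable (m : Fin N → ℝ)

lemma minner_add_left (x y z : Conf d N) : minner m (x + y) z = minner m x z + minner m y z := by
  simp only [minner, Pi.add_apply, inner_add_left, mul_add, Finset.sum_add_distrib]

lemma minner_comm (x y : Conf d N) : minner m x y = minner m y x := by
  simp only [minner, real_inner_comm]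

lemma minner_add_right (x y z : Conf d N) : minner m x (y + z) = minner m x y + minner m x z := by
  rw [minner_comm, minner_add_left, minner_comm m y, minner_comm m z]

lemma minner_smul_left (c : ℝ) (x y : Conf d N) : minner m (c • x) y = c * minner m x y := by
  simp only [minner, Pi.smul_apply, real_inner_smul_left, Finset.mul_sum, mul_left_comm]

lemma minner_smul_right (c : ℝ) (x y : Conf d N) : minner m x (c • y) = c * minner m x y := by
  rw [minner_comm, minner_smul_left, minner_comm]

lemma minner_zero_right (x : Conf d N) : minner m x 0 = 0 := by
  simpa using minner_smul_right m 0 x 0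

lemma minner_neg_right (x y : Conf d N) : minner m x (-y) = -minner m x y := by
  simpa using minner_smul_right m (-1) x y

lemma minner_sub_left (x y z : Conf d N) : minner m (x - y) z = minner m x z - minner m y z := by
  rw [sub_eq_add_neg, minner_add_left, minner_comm m (-y), minner_neg_right, minner_comm m z,
    sub_eq_add_neg]

lemma minner_add_self (x y : Conf d N) :
    minner m (x + y) (x + y) = minner m x x + 2 * minner m x y + minner m y y := by
  rw [minner_add_left, minner_add_right, minner_add_right, minner_comm m y x]
  ring

lemma continuous_minner : Continuous fun p : Conf d N × Conf d N => minner m p.1 p.2 := by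
  unfold minner
  fun_prop

variable {m} (hm : ∀ i, 0 < m i)
include hm

lemma minner_self_nonneg (x : Conf d N) : 0 ≤ minner m x x :=
  Finset.sum_nonneg fun i _ => mul_nonneg (hm i).le real_inner_self_nonneg

lemma mnorm_sq (x : Conf d N) : mnorm m x ^ 2 = minner m x x :=
  Real.sq_sqrt (minner_self_nonneg hm x)

lemma abs_minner_le (x y : Conf d N) : |minner m x y| ≤ (minner m x x + minner m y y) / 2 := by
  have hplus := minner_self_nonneg hm (x + y)
  have hminus := minner_self_nonneg hm (x + -y)
  simp only [minner_add_self, minner_neg_right, minner_comm m (-y)] at hplus hminus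
  exact abs_le.2 ⟨by linarith, by linarith⟩

lemma mul_norm_sq_le_minner (x : Conf d N) (i : Fin N) : m i * ‖x i‖ ^ 2 ≤ minner m x x := by
  rw [← real_inner_self_eq_norm_sq]
  exact Finset.single_le_sum (f := fun i => m i * ⟪x i, x i⟫)
    (fun i _ => mul_nonneg (hm i).le real_inner_self_nonneg) (Finset.mem_univ i)

lemma minner_self_le (x : Conf d N) : minner m x x ≤ (∑ i, m i) * ‖x‖ ^ 2 := by
  rw [Finset.sum_mul]
  refine Finset.sum_le_sum fun i _ => ?_
  rw [real_inner_self_eq_norm_sq]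
  have := norm_le_pi_norm x i
  have := (hm i).le
  gcongr

lemma exists_norm_sq_le_minner : ∃ c : ℝ, 0 < c ∧ ∀ x : Conf d N, ‖x‖ ^ 2 ≤ c * minner m x x := by
  have hsum : 0 ≤ ∑ i, (m i)⁻¹ := Finset.sum_nonneg fun i _ => (inv_pos.2 (hm i)).le
  refine ⟨1 + ∑ i, (m i)⁻¹, by positivity, fun x => ?_⟩
  have hx := minner_self_nonneg hm x
  have hbound : 0 ≤ (1 + ∑ i, (m i)⁻¹) * minner m x x := by positivity
  rw [← Real.le_sqrt (norm_nonneg _) hbound, pi_norm_le_iff_of_nonneg (Real.sqrt_nonneg _)]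
  intro i
  rw [Real.le_sqrt (norm_nonneg _) hbound]
  calc ‖x i‖ ^ 2 ≤ (m i)⁻¹ * minner m x x :=
        (le_inv_mul_iff₀ (hm i)).2 (mul_norm_sq_le_minner hm x i)
    _ ≤ (1 + ∑ i, (m i)⁻¹) * minner m x x := by
        gcongr
        exact (Finset.single_le_sum (f := fun i => (m i)⁻¹) (fun i _ => (inv_pos.2 (hm i)).le)
          (Finset.mem_univ i)).trans (le_add_of_nonneg_left zero_le_one)

variable {α : Type*} [MeasurableSpace α] {μ : Measure α} {f g : α → Conf d N}

lemma integrable_minner (hf : AEStronglyMeasurable f μ) (hg : AEStronglyMeasurable g μ)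
    (hff : Integrable (fun t => minner m (f t) (f t)) μ)
    (hgg : Integrable (fun t => minner m (g t) (g t)) μ) :
    Integrable (fun t => minner m (f t) (g t)) μ :=
  ((hff.add hgg).div_const 2).mono' ((continuous_minner m).comp_aestronglyMeasurable₂ hf hg)
    (ae_of_all _ fun t => abs_minner_le hm (f t) (g t))

lemma integrable_minner_add_self (hf : AEStronglyMeasurable f μ) (hg : AEStronglyMeasurable g μ)
    (hff : Integrable (fun t => minner m (f t) (f t)) μ)
    (hgg : Integrable (fun t => minner m (g t) (g t)) μ) :
    Integrable (fun t => minner m (f t + g t) (f t + g t)) μ := by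
  simp only [minner_add_self]
  exact (hff.add ((integrable_minner hm hf hg hff hgg).const_mul 2)).add hgg

end MassInner

lemma inX_zero {m : Fin N → ℝ} : inX m (0 : Conf d N) := by simp [inX]

lemma inX.add {m : Fin N → ℝ} {x y : Conf d N} (hx : inX m x) (hy : inX m y) : inX m (x + y) := by
  unfold inX at *
  simp only [Pi.add_apply, smul_add, Finset.sum_add_distrib, hx, hy, add_zero]

lemma inX.smul {m : Fin N → ℝ} {x : Conf d N} (c : ℝ) (hx : inX m x) : inX m (c • x) := by
  unfold inX at *
  simp only [Pi.smul_apply, smul_comm _ c, ← Finset.smul_sum, hx, smul_zero]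

lemma inX.neg {m : Fin N → ℝ} {x : Conf d N} (hx : inX m x) : inX m (-x) := by
  simpa using hx.smul (-1)

lemma inX.sub {m : Fin N → ℝ} {x y : Conf d N} (hx : inX m x) (hy : inX m y) : inX m (x - y) :=
  sub_eq_add_neg x y ▸ hx.add hy.neg

lemma continuousAt_U (m : Fin N → ℝ) {x : Conf d N} (hx : ¬ collision x) :
    ContinuousAt (U m) x := by
  unfold U
  refine tendsto_finsetSum _ fun i _ => tendsto_finsetSum _ fun j _ => ?_
  split_ifs with hij
  · have hne : ‖x i - x j‖ ≠ 0 :=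
      norm_ne_zero_iff.2 (sub_ne_zero.2 fun h => hx ⟨i, j, hij.ne, h⟩)
    exact ContinuousAt.div (f := fun _ : Conf d N => m i * m j) (by fun_prop) (by fun_prop) hne
  · exact tendsto_const_nhds

lemma measurable_U (m : Fin N → ℝ) : Measurable (U m : Conf d N → ℝ) := by
  unfold U
  refine Finset.measurable_fun_sum _ fun i _ => Finset.measurable_fun_sum _ fun j _ => ?_
  split_ifs <;> fun_prop

lemma U_nonneg {m : Fin N → ℝ} (hm : ∀ i, 0 < m i) (x : Conf d N) : 0 ≤ U m x := by
  refine Finset.sum_nonneg fun i _ => Finset.sum_nonneg fun j _ => ?_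
  have := (hm i).le
  have := (hm j).le
  split_ifs <;> positivity

lemma integrableOn_U_comp (m : Fin N → ℝ) {c : ℝ → Conf d N} {s t : ℝ}
    (hc : ContinuousOn c (Icc s t)) (hcol : ∀ r ∈ Icc s t, ¬ collision (c r)) :
    IntegrableOn (fun r => U m (c r)) (Ioc s t) := by
  refine (ContinuousOn.integrableOn_Icc fun r hr => ?_).mono_set Ioc_subset_Icc_self
  exact ContinuousAt.comp_continuousWithinAt (g := U m) (continuousAt_U m (hcol r hr)) (hc r hr)

lemma not_collision_smul {x : Conf d N} (hx : ¬ collision x) {t : ℝ} (ht : t ≠ 0) :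
    ¬ collision (t • x) := by
  rintro ⟨i, j, hij, h⟩
  exact hx ⟨i, j, hij, smul_right_injective _ ht h⟩

lemma integrableOn_U_smul (m : Fin N → ℝ) {a : Conf d N} (ha : ¬ collision a) (T : ℝ) :
    IntegrableOn (fun t : ℝ => U m (t • a)) (Ioc 1 T) :=
  integrableOn_U_comp m (by fun_prop) fun _ ht =>
    not_collision_smul ha (zero_lt_one.trans_le ht.1).ne'

/-! ### Curves of finite energy and their variations -/

section EventuallyZero

variable {E : Type*} [NormedAddCommGroup E] {f : ℝ → E} {s T : ℝ}

lemma lt_of_mem_diff_Ioc {S : Set ℝ} (hS : S ⊆ Ioi s) {t : ℝ} (ht : t ∈ S \ Ioc s T) : T < t :=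
  not_le.1 fun h => ht.2 ⟨hS ht.1, h⟩

lemma integrableOn_Ioi_of_eq_zero (hf : IntegrableOn f (Ioc s T)) (h0 : ∀ t, T < t → f t = 0) :
    IntegrableOn f (Ioi s) :=
  hf.of_forall_sdiff_eq_zero measurableSet_Ioi fun t ht => h0 t (lt_of_mem_diff_Ioc subset_rfl ht)

lemma setIntegral_eq_setIntegral_Ioc_of_eq_zero [NormedSpace ℝ E] (h0 : ∀ t, T < t → f t = 0)
    {S : Set ℝ} (hSm : MeasurableSet S) (hS : S ⊆ Ioi s) (hTS : Ioc s T ⊆ S) :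
    ∫ t in S, f t = ∫ t in Ioc s T, f t :=
  setIntegral_eq_of_subset_of_forall_sdiff_eq_zero hSm hTS fun t ht =>
    h0 t (lt_of_mem_diff_Ioc hS ht)

end EventuallyZero

lemma timeSet_top (t : ℝ) : timeSet t ⊤ = Ioi t := by
  ext s
  simp [timeSet, EReal.coe_lt_top]

section Curves

variable {m : Fin N → ℝ} {a x : Conf d N} {φ φ' ψ ψ' ξ ξ' ζ ζ' : ℝ → Conf d N} {T : ℝ}

lemma inD_top_iff (hm : ∀ i, 0 < m i) :
    InD m 1 ⊤ φ φ' ↔ φ 1 = 0 ∧ (∀ t, 1 ≤ t → inX m (φ t)) ∧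
      (∀ t, 1 ≤ t → φ t = ∫ s in Ioc 1 t, φ' s) ∧ (∀ t, 1 ≤ t → IntegrableOn φ' (Ioc 1 t)) ∧
      IntegrableOn (fun t => minner m (φ' t) (φ' t)) (Ioi 1) := by
  simp only [InD, EReal.coe_lt_top, forall_const, timeSet_top, mnorm_sq hm]

lemma InD.integrableOn (h : InD m 1 ⊤ φ φ') (T : ℝ) : IntegrableOn φ' (Ioc 1 T) := by
  rcases le_total 1 T with hT | hT
  · exact h.2.2.2.1 T hT (EReal.coe_lt_top _)
  · simp only [Ioc_eq_empty_of_le hT, integrableOn_empty]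

lemma InD.eq_integral (h : InD m 1 ⊤ φ φ') {t : ℝ} (ht : 1 ≤ t) : φ t = ∫ s in Ioc 1 t, φ' s :=
  h.2.2.1 t ht (EReal.coe_lt_top _)

lemma InD.inX (h : InD m 1 ⊤ φ φ') {t : ℝ} (ht : 1 ≤ t) : inX m (φ t) :=
  h.2.1 t ht (EReal.coe_lt_top _)

lemma InD.integrableOn_sq (hm : ∀ i, 0 < m i) (h : InD m 1 ⊤ φ φ') :
    IntegrableOn (fun t => minner m (φ' t) (φ' t)) (Ioi 1) :=
  ((inD_top_iff hm).1 h).2.2.2.2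

lemma InD.aestronglyMeasurable (h : InD m 1 ⊤ φ φ') :
    AEStronglyMeasurable φ' (volume.restrict (Ioi 1)) := by
  have hcover : Ioi (1 : ℝ) = ⋃ n : ℕ, Ioc 1 (n : ℝ) := by
    ext t
    simp only [mem_Ioi, mem_iUnion, mem_Ioc, exists_and_left]
    exact ⟨fun ht => ⟨ht, exists_nat_ge t⟩, And.left⟩
  rw [hcover, aestronglyMeasurable_iUnion_iff]
  exact fun n => (h.integrableOn n).aestronglyMeasurable

lemma InD.continuousOn (h : InD m 1 ⊤ φ φ') (T : ℝ) : ContinuousOn φ (Icc 1 T) := by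
  have hint := h.integrableOn T
  rw [← integrableOn_Icc_iff_integrableOn_Ioc] at hint
  exact (intervalIntegral.continuousOn_primitive hint).congr fun _ ht => h.eq_integral ht.1

lemma InD.continuousOn_hypCurve (h : InD m 1 ⊤ φ φ') (a x : Conf d N) (T : ℝ) :
    ContinuousOn (hypCurve a x φ) (Icc 1 T) := by
  have := h.continuousOn T
  unfold hypCurve
  fun_prop

lemma InD.add (hm : ∀ i, 0 < m i) (h : InD m 1 ⊤ φ φ') (k : InD m 1 ⊤ ψ ψ') :
    InD m 1 ⊤ (fun t => φ t + ψ t) (fun t => φ' t + ψ' t) := by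
  refine (inD_top_iff hm).2 ⟨by rw [h.1, k.1, add_zero], fun t ht => (h.inX ht).add (k.inX ht),
    fun t ht => ?_, fun t _ => (h.integrableOn t).add (k.integrableOn t),
    integrable_minner_add_self hm h.aestronglyMeasurable k.aestronglyMeasurable
      (h.integrableOn_sq hm) (k.integrableOn_sq hm)⟩
  rw [integral_add (h.integrableOn t) (k.integrableOn t), ← h.eq_integral ht, ← k.eq_integral ht]

lemma InD.smul (hm : ∀ i, 0 < m i) (c : ℝ) (h : InD m 1 ⊤ φ φ') :
    InD m 1 ⊤ (fun t => c • φ t) (fun t => c • φ' t) := by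
  refine (inD_top_iff hm).2 ⟨by rw [h.1, smul_zero], fun t ht => (h.inX ht).smul c,
    fun t ht => ?_, fun t _ => (h.integrableOn t).smul c, ?_⟩
  · rw [integral_smul, ← h.eq_integral ht]
  · simp only [minner_smul_left, minner_smul_right]
    exact ((h.integrableOn_sq hm).const_mul c).const_mul c

lemma InD.sub (hm : ∀ i, 0 < m i) (h : InD m 1 ⊤ φ φ') (k : InD m 1 ⊤ ψ ψ') :
    InD m 1 ⊤ (fun t => φ t - ψ t) (fun t => φ' t - ψ' t) := by
  simpa only [neg_one_smul, ← sub_eq_add_neg] using h.add hm (k.smul hm (-1))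

/-- `ξ` is a variation with velocity `ξ'` that vanishes after time `T`, its starting point `ξ 1`
being free: the curves admissible at `x` are moved by `ξ` to curves admissible at `x + ξ 1`. -/
structure Variation (m : Fin N → ℝ) (T : ℝ) (ξ ξ' : ℝ → Conf d N) : Prop where
  inD : InD m 1 ⊤ (fun t => ξ t - ξ 1) ξ'
  eq_zero : ∀ t, T ≤ t → ξ t = 0
  deriv_eq_zero : ∀ t, T < t → ξ' t = 0

lemma Variation.inX_one (hξ : Variation m T ξ ξ') : inX m (ξ 1) := by
  have h := hξ.inD.inX (le_max_left 1 T)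
  rw [hξ.eq_zero _ (le_max_right 1 T), zero_sub] at h
  simpa using h.neg

lemma Variation.continuousOn (hξ : Variation m T ξ ξ') (S : ℝ) : ContinuousOn ξ (Icc 1 S) :=
  ((hξ.inD.continuousOn S).add continuousOn_const).congr fun t _ => (sub_add_cancel (ξ t) _).symm

lemma Variation.add (hm : ∀ i, 0 < m i) (hξ : Variation m T ξ ξ') (hζ : Variation m T ζ ζ') :
    Variation m T (fun t => ξ t + ζ t) (fun t => ξ' t + ζ' t) where
  inD := by simpa only [add_sub_add_comm] using hξ.inD.add hm hζ.inD
  eq_zero t ht := by rw [hξ.eq_zero t ht, hζ.eq_zero t ht, add_zero]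
  deriv_eq_zero t ht := by rw [hξ.deriv_eq_zero t ht, hζ.deriv_eq_zero t ht, add_zero]

lemma Variation.smul (hm : ∀ i, 0 < m i) (c : ℝ) (hξ : Variation m T ξ ξ') :
    Variation m T (fun t => c • ξ t) (fun t => c • ξ' t) where
  inD := by simpa only [smul_sub] using hξ.inD.smul hm c
  eq_zero t ht := by rw [hξ.eq_zero t ht, smul_zero]
  deriv_eq_zero t ht := by rw [hξ.deriv_eq_zero t ht, smul_zero]

lemma indicator_Iic_of_lt {E : Type*} [Zero E] (f : ℝ → E) {s t : ℝ} (hst : s < t) :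
    (Iic s).indicator f t = 0 :=
  indicator_of_notMem (notMem_Iic.2 hst) f

lemma indicator_Iic_of_le {E : Type*} [Zero E] (f : ℝ → E) {s t : ℝ} (hts : t ≤ s) :
    (Iic s).indicator f t = f t :=
  indicator_of_mem (mem_Iic.2 hts) f

lemma setIntegral_indicator_Iic {E : Type*} [NormedAddCommGroup E] [NormedSpace ℝ E] (f : ℝ → E)
    (r s t : ℝ) : ∫ u in Ioc r t, (Iic s).indicator f u = ∫ u in Ioc r (min t s), f u := by
  rw [setIntegral_indicator measurableSet_Iic, Ioc_inter_Iic]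

lemma indicator_Iic_sub_one {s t : ℝ} (hs : 1 ≤ s) :
    (Iic s).indicator (fun t => φ t - φ s) t - (Iic s).indicator (fun t => φ t - φ s) 1
      = φ (min t s) - φ 1 := by
  rw [indicator_Iic_of_le _ hs]
  rcases le_or_gt t s with hts | hst
  · rw [indicator_Iic_of_le _ hts, min_eq_left hts, sub_sub_sub_cancel_right]
  · rw [indicator_Iic_of_lt _ hst, min_eq_right hst.le, zero_sub, neg_sub]

lemma variation_indicator (hm : ∀ i, 0 < m i) {s : ℝ} (hs : 1 ≤ s) (hsT : s ≤ T)
    (hX : ∀ t ∈ Icc 1 s, inX m (φ t)) (hi : IntegrableOn φ' (Ioc 1 s))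
    (hsq : IntegrableOn (fun t => minner m (φ' t) (φ' t)) (Ioc 1 s))
    (heq : ∀ t ∈ Icc 1 s, φ t = φ 1 + ∫ r in Ioc 1 t, φ' r) :
    Variation m T ((Iic s).indicator fun t => φ t - φ s) ((Iic s).indicator φ') := by
  refine ⟨(inD_top_iff hm).2 ⟨sub_self _, fun t ht => ?_, fun t ht => ?_, fun t _ => ?_, ?_⟩,
    fun t ht => ?_, fun t ht => indicator_Iic_of_lt _ (hsT.trans_lt ht)⟩
  · rw [indicator_Iic_sub_one hs]
    exact (hX _ ⟨le_min ht hs, min_le_right _ _⟩).sub (hX 1 ⟨le_rfl, hs⟩)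
  · rw [indicator_Iic_sub_one hs, heq _ ⟨le_min ht hs, min_le_right _ _⟩, add_sub_cancel_left,
      setIntegral_indicator_Iic]
  · refine (integrableOn_Ioi_of_eq_zero ?_ fun r => indicator_Iic_of_lt _).mono_set
      Ioc_subset_Ioi_self
    exact hi.congr_fun (fun r hr => (indicator_Iic_of_le _ hr.2).symm) measurableSet_Ioc
  · refine integrableOn_Ioi_of_eq_zero (hsq.congr_fun (fun r hr => ?_) measurableSet_Ioc)
      fun r hr => by rw [indicator_Iic_of_lt _ hr, minner_zero_right]
    simp only [indicator_Iic_of_le _ hr.2]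
  · rcases (hsT.trans ht).eq_or_lt with rfl | hst
    · rw [indicator_Iic_of_le _ le_rfl, sub_self]
    · exact indicator_Iic_of_lt _ hst

lemma InD.variation_indicator (hm : ∀ i, 0 < m i) (h : InD m 1 ⊤ φ φ') {s : ℝ} (hs : 1 ≤ s)
    (hsT : s ≤ T) :
    Variation m T ((Iic s).indicator fun t => φ t - φ s) ((Iic s).indicator φ') :=
  NBodyHJ.variation_indicator hm hs hsT (fun _ ht => h.inX ht.1) (h.integrableOn s)
    ((h.integrableOn_sq hm).mono_set Ioc_subset_Ioi_self)
    fun t ht => by rw [h.1, zero_add, h.eq_integral ht.1]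

lemma variation_smul (hm : ∀ i, 0 < m i) {w : Conf d N} (hw : inX m w) {P P' : ℝ → ℝ}
    (hP : ∀ t, HasDerivAt P (P' t) t) (hP' : Continuous P') (hT : 1 ≤ T) (hPT : P T = 0) :
    Variation m T ((Iic T).indicator fun t => P t • w) ((Iic T).indicator fun t => P' t • w) := by
  have hloc : ∀ t, IntegrableOn (fun r => P' r • w) (Ioc 1 t) := fun t =>
    (by fun_prop : Continuous fun r => P' r • w).integrableOn_Ioc
  have h := NBodyHJ.variation_indicator (φ := fun t => P t • w) (φ' := fun t => P' t • w) hm hT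
    le_rfl (fun t _ => hw.smul _) (hloc T) ?_ fun t ht => ?_
  · simpa only [hPT, zero_smul, sub_zero] using h
  · simp only [minner_smul_left, minner_smul_right]
    exact (by fun_prop : Continuous fun t => P' t * (P' t * minner m w w)).integrableOn_Ioc
  · rw [integral_smul_const, ← intervalIntegral.integral_of_le ht.1,
      intervalIntegral.integral_eq_sub_of_hasDerivAt (fun r _ => hP r)
        (hP'.intervalIntegrable _ _), sub_smul, add_sub_cancel]

end Curves

/-! ### Curves of finite action -/

/-- `φ`, with velocity `φ'`, is an admissible curve whose renormalized action `A_x(φ)` is the real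
number `V`. -/
structure HasFiniteAction (m : Fin N → ℝ) (a x : Conf d N) (φ φ' : ℝ → Conf d N) (V : ℝ) :
    Prop where
  inD : InD m 1 ⊤ φ φ'
  integrableOn : IntegrableOn (hypIntegrand m a x φ φ') (Ioi 1)
  ae_not_collision : ∀ᵐ t ∂volume.restrict (Ioi 1), ¬ collision (hypCurve a x φ t)
  integral_eq : ∫ t in Ioi 1, hypIntegrand m a x φ φ' t = V

/-- The change of the Lagrangian when the curve `γ` with (renormalized) velocity `φ'` is moved by
`ξ` with velocity `ξ'`. -/
def lagrangianIncrement (m : Fin N → ℝ) (γ φ' ξ ξ' : ℝ → Conf d N) (t : ℝ) : ℝ :=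
  minner m (φ' t) (ξ' t) + minner m (ξ' t) (ξ' t) / 2 + U m (γ t + ξ t) - U m (γ t)

section FiniteAction

variable {m : Fin N → ℝ} {a x : Conf d N} {φ φ' ξ ξ' : ℝ → Conf d N} {V T : ℝ}

lemma hasFiniteAction_of_hypAction_eq (h : InD m 1 ⊤ φ φ')
    (hV : hypAction m a x ⊤ φ φ' = (V : EReal)) : HasFiniteAction m a x φ φ' V := by
  unfold hypAction at hV
  split_ifs at hV with hfin
  · rw [timeSet_top] at hfin hV
    exact ⟨h, hfin.1, hfin.2, EReal.coe_eq_coe_iff.1 hV⟩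
  · exact absurd hV (EReal.top_ne_coe _)

lemma HasFiniteAction.hypInf_le (h : HasFiniteAction m a x φ φ' V) :
    hypInf m a x ⊤ ≤ (V : EReal) := by
  refine iInf_le_of_le φ (iInf_le_of_le φ' (iInf_le_of_le h.inD (le_of_eq ?_)))
  rw [hypAction, timeSet_top, if_pos ⟨h.integrableOn, h.ae_not_collision⟩, h.integral_eq]

lemma hasFiniteAction_zero (hm : ∀ i, 0 < m i) (ha : ¬ collision a) :
    HasFiniteAction m a a 0 0 0 := by
  have hcurve : ∀ t, hypCurve a a 0 t = t • a := fun t => by simp [hypCurve]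
  have hintegrand : hypIntegrand m a a 0 0 = 0 := by
    ext t
    simp [hypIntegrand, hcurve, mnorm_sq hm, minner_zero_right]
  refine ⟨(inD_top_iff hm).2 ⟨rfl, fun _ _ => inX_zero, by simp,
    fun _ _ => integrableOn_zero, by simp [minner_zero_right]⟩, hintegrand ▸ integrableOn_zero, ?_,
    by simp [hintegrand]⟩
  refine (ae_restrict_mem measurableSet_Ioi).mono fun t ht => hcurve t ▸ ?_
  exact not_collision_smul ha (zero_lt_one.trans ht).ne'

lemma HasFiniteAction.integrableOn_U (hm : ∀ i, 0 < m i) (ha : ¬ collision a)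
    (h : HasFiniteAction m a x φ φ' V) (T : ℝ) :
    IntegrableOn (fun t => U m (hypCurve a x φ t)) (Ioc 1 T) := by
  have hL := h.integrableOn.mono_set (s := Ioc 1 T) Ioc_subset_Ioi_self
  have hK := (h.inD.integrableOn_sq hm).mono_set (s := Ioc 1 T) Ioc_subset_Ioi_self
  refine ((hL.add (integrableOn_U_smul m ha T)).sub (hK.div_const 2)).congr
    (ae_of_all _ fun t => ?_)
  simp only [hypIntegrand, mnorm_sq hm, Pi.add_apply, Pi.sub_apply]
  ring

lemma integrableOn_minner (hm : ∀ i, 0 < m i) (h : InD m 1 ⊤ φ φ') (hξ : Variation m T ξ ξ') :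
    IntegrableOn (fun t => minner m (φ' t) (ξ' t)) (Ioi 1) :=
  integrable_minner hm h.aestronglyMeasurable hξ.inD.aestronglyMeasurable
    (h.integrableOn_sq hm) (hξ.inD.integrableOn_sq hm)

lemma HasFiniteAction.integrableOn_lagrangianIncrement (hm : ∀ i, 0 < m i) (ha : ¬ collision a)
    (h : HasFiniteAction m a x φ φ' V) (hξ : Variation m T ξ ξ')
    (hU : IntegrableOn (fun t => U m (hypCurve a x φ t + ξ t)) (Ioc 1 T)) :
    IntegrableOn (lagrangianIncrement m (hypCurve a x φ) φ' ξ ξ') (Ioc 1 T) :=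
  ((((integrableOn_minner hm h.inD hξ).add
    ((hξ.inD.integrableOn_sq hm).div_const 2)).mono_set Ioc_subset_Ioi_self).add hU).sub
    (h.integrableOn_U hm ha T)

lemma hypCurve_add_variation (a x : Conf d N) (φ ξ : ℝ → Conf d N) (t : ℝ) :
    hypCurve a (x + ξ 1) (fun t => φ t + (ξ t - ξ 1)) t = hypCurve a x φ t + ξ t := by
  simp only [hypCurve]
  abel

lemma hypIntegrand_add_variation (hm : ∀ i, 0 < m i) :
    hypIntegrand m a (x + ξ 1) (fun t => φ t + (ξ t - ξ 1)) (fun t => φ' t + ξ' t)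
      = fun t => hypIntegrand m a x φ φ' t
        + lagrangianIncrement m (hypCurve a x φ) φ' ξ ξ' t := by
  funext t
  simp only [hypIntegrand, lagrangianIncrement, hypCurve_add_variation, mnorm_sq hm,
    minner_add_self]
  ring

lemma HasFiniteAction.add_variation (hm : ∀ i, 0 < m i) (ha : ¬ collision a)
    (h : HasFiniteAction m a x φ φ' V) (hξ : Variation m T ξ ξ')
    (hU : IntegrableOn (fun t => U m (hypCurve a x φ t + ξ t)) (Ioc 1 T))
    (hcol : ∀ᵐ t ∂volume.restrict (Ioc 1 T), ¬ collision (hypCurve a x φ t + ξ t)) :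
    HasFiniteAction m a (x + ξ 1) (fun t => φ t + (ξ t - ξ 1)) (fun t => φ' t + ξ' t)
      (V + ∫ t in Ioc 1 T, lagrangianIncrement m (hypCurve a x φ) φ' ξ ξ' t) := by
  have hzero (t : ℝ) (ht : T < t) : lagrangianIncrement m (hypCurve a x φ) φ' ξ ξ' t = 0 := by
    simp only [lagrangianIncrement, hξ.deriv_eq_zero t ht, hξ.eq_zero t ht.le, minner_zero_right,
      add_zero, zero_div, zero_add, sub_self]
  have hincr := integrableOn_Ioi_of_eq_zero
    (h.integrableOn_lagrangianIncrement hm ha hξ hU) hzero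
  refine ⟨h.inD.add hm hξ.inD, ?_, ?_, ?_⟩
  · rw [hypIntegrand_add_variation hm]
    exact h.integrableOn.add hincr
  · simp only [hypCurve_add_variation]
    filter_upwards [h.ae_not_collision, (ae_restrict_iff' measurableSet_Ioc).1 hcol |>
      ae_restrict_of_ae (s := Ioi 1), ae_restrict_mem measurableSet_Ioi] with t hbefore hafter ht
    rcases le_or_gt t T with htT | htT
    · exact hafter ⟨ht, htT⟩
    · rwa [hξ.eq_zero t htT.le, add_zero]
  · rw [hypIntegrand_add_variation hm, integral_add h.integrableOn hincr, h.integral_eq,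
      setIntegral_eq_setIntegral_Ioc_of_eq_zero hzero measurableSet_Ioi subset_rfl
        Ioc_subset_Ioi_self]

end FiniteAction

/-! ### The extended Lagrangian -/

/-- The Newtonian potential with its value `+∞` at collisions. -/
def extendedU (m : Fin N → ℝ) (x : Conf d N) : ℝ≥0∞ :=
  ∑ i, ∑ j, if i < j then ENNReal.ofReal (m i * m j) * ‖x i - x j‖ₑ⁻¹ else 0

/-- The Lagrangian at the position `x` with velocity `v`, equal to `+∞` at collisions. -/
def extendedLagrangian (m : Fin N → ℝ) (x v : Conf d N) : ℝ≥0∞ :=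
  ENNReal.ofReal (minner m v v / 2) + extendedU m x

lemma collision.exists_lt {x : Conf d N} (hx : collision x) : ∃ i j, i < j ∧ x i = x j := by
  obtain ⟨i, j, hij, h⟩ := hx
  rcases hij.lt_or_gt with hlt | hgt
  · exact ⟨i, j, hlt, h⟩
  · exact ⟨j, i, hgt, h.symm⟩

lemma measurable_extendedU (m : Fin N → ℝ) : Measurable (extendedU m : Conf d N → ℝ≥0∞) := by
  unfold extendedU
  refine Finset.measurable_fun_sum _ fun i _ => Finset.measurable_fun_sum _ fun j _ => ?_
  split_ifs <;> fun_prop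

lemma measurable_kinetic (m : Fin N → ℝ) :
    Measurable fun v : Conf d N => ENNReal.ofReal (minner m v v / 2) := by
  have := (continuous_minner (d := d) m).comp (continuous_id.prodMk continuous_id)
  exact (ENNReal.continuous_ofReal.comp (this.div_const 2)).measurable

section ExtendedLagrangian

variable {m : Fin N → ℝ} (hm : ∀ i, 0 < m i)
include hm

lemma kinetic_nonneg (v : Conf d N) : 0 ≤ minner m v v / 2 :=
  div_nonneg (minner_self_nonneg hm v) zero_le_two

lemma extendedU_eq_ofReal {x : Conf d N} (hx : ¬ collision x) :
    extendedU m x = ENNReal.ofReal (U m x) := by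
  have hterm (i j : Fin N) : 0 ≤ if i < j then m i * m j / ‖x i - x j‖ else 0 := by
    have := (hm i).le
    have := (hm j).le
    split_ifs <;> positivity
  unfold extendedU U
  rw [ENNReal.ofReal_sum_of_nonneg fun i _ => Finset.sum_nonneg fun j _ => hterm i j]
  refine Finset.sum_congr rfl fun i _ => ?_
  rw [ENNReal.ofReal_sum_of_nonneg fun j _ => hterm i j]
  refine Finset.sum_congr rfl fun j _ => ?_
  split_ifs with hij
  · have hpos : 0 < ‖x i - x j‖ := norm_pos_iff.2 (sub_ne_zero.2 fun h => hx ⟨i, j, hij.ne, h⟩)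
    rw [ENNReal.ofReal_div_of_pos hpos, div_eq_mul_inv, ofReal_norm]
  · exact ENNReal.ofReal_zero.symm

lemma extendedU_eq_top {x : Conf d N} (hx : collision x) : extendedU m x = ⊤ := by
  obtain ⟨i, j, hij, h⟩ := hx.exists_lt
  have hmass := mul_pos (hm i) (hm j)
  refine ENNReal.sum_eq_top.2 ⟨i, Finset.mem_univ i,
    ENNReal.sum_eq_top.2 ⟨j, Finset.mem_univ j, ?_⟩⟩
  simp [hij, h, hmass]

variable {α : Type*} [MeasurableSpace α] {μ : Measure α} {c v : α → Conf d N}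

lemma ae_not_collision_of_lintegral_extendedU_ne_top (hc : AEMeasurable c μ)
    (htop : ∫⁻ t, extendedU m (c t) ∂μ ≠ ⊤) : ∀ᵐ t ∂μ, ¬ collision (c t) := by
  filter_upwards [ae_lt_top' ((measurable_extendedU m).comp_aemeasurable hc) htop] with t ht hcol
  exact ht.ne (extendedU_eq_top hm hcol)

lemma integrable_U_of_lintegral_extendedU_ne_top (hc : AEMeasurable c μ)
    (htop : ∫⁻ t, extendedU m (c t) ∂μ ≠ ⊤) : Integrable (fun t => U m (c t)) μ := by
  refine ⟨((measurable_U m).comp_aemeasurable hc).aestronglyMeasurable, ?_⟩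
  rw [hasFiniteIntegral_iff_ofReal (ae_of_all _ fun t => U_nonneg hm _)]
  refine (lintegral_congr_ae ?_).trans_lt htop.lt_top
  filter_upwards [ae_not_collision_of_lintegral_extendedU_ne_top hm hc htop] with t ht
    using (extendedU_eq_ofReal hm ht).symm

lemma lintegral_extendedLagrangian (hvv : Integrable (fun t => minner m (v t) (v t)) μ)
    (hU : Integrable (fun t => U m (c t)) μ) (hc : ∀ᵐ t ∂μ, ¬ collision (c t)) :
    ∫⁻ t, extendedLagrangian m (c t) (v t) ∂μ
      = ENNReal.ofReal (∫ t, (minner m (v t) (v t) / 2 + U m (c t)) ∂μ) := by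
  rw [ofReal_integral_eq_lintegral_ofReal
    (f := fun t => minner m (v t) (v t) / 2 + U m (c t)) ((hvv.div_const 2).add hU)
    (ae_of_all _ fun t => add_nonneg (kinetic_nonneg hm _) (U_nonneg hm _))]
  refine lintegral_congr_ae ?_
  filter_upwards [hc] with t ht
  rw [extendedLagrangian, ENNReal.ofReal_add (kinetic_nonneg hm _) (U_nonneg hm _),
    extendedU_eq_ofReal hm ht]

variable {a x : Conf d N} {φ φ' ξ ξ' : ℝ → Conf d N} {V T : ℝ}

lemma HasFiniteAction.lintegral_extendedLagrangian (ha : ¬ collision a)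
    (h : HasFiniteAction m a x φ φ' V) (T : ℝ) :
    ∫⁻ t in Ioc 1 T, extendedLagrangian m (hypCurve a x φ t) (φ' t)
      = ENNReal.ofReal (∫ t in Ioc 1 T, (minner m (φ' t) (φ' t) / 2 + U m (hypCurve a x φ t))) :=
  NBodyHJ.lintegral_extendedLagrangian hm
    ((h.inD.integrableOn_sq hm).mono_set Ioc_subset_Ioi_self) (h.integrableOn_U hm ha T)
    (ae_restrict_of_ae_restrict_of_subset Ioc_subset_Ioi_self h.ae_not_collision)

/-- The case of an infinite right-hand side is what makes this usable for competitors that might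
run into a collision. -/
lemma HasFiniteAction.lintegral_extendedLagrangian_le (ha : ¬ collision a)
    (h : HasFiniteAction m a x φ φ' V) (hmin : hypInf m a x ⊤ = (V : EReal))
    (hξ : Variation m T ξ ξ') (hξ1 : ξ 1 = 0) :
    ∫⁻ t in Ioc 1 T, extendedLagrangian m (hypCurve a x φ t) (φ' t)
      ≤ ∫⁻ t in Ioc 1 T, extendedLagrangian m (hypCurve a x φ t + ξ t) (φ' t + ξ' t) := by
  by_cases htop : ∫⁻ t in Ioc 1 T, extendedLagrangian m (hypCurve a x φ t + ξ t) (φ' t + ξ' t) = ⊤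
  · exact htop ▸ le_top
  have hmeas : AEMeasurable (fun t => hypCurve a x φ t + ξ t) (volume.restrict (Ioc 1 T)) :=
    (((h.inD.continuousOn_hypCurve a x T).add (hξ.continuousOn T)).mono
      Ioc_subset_Icc_self).aemeasurable measurableSet_Ioc
  have hUtop : ∫⁻ t in Ioc 1 T, extendedU m (hypCurve a x φ t + ξ t) ≠ ⊤ :=
    ne_top_of_le_ne_top htop (lintegral_mono fun t => le_add_self)
  have hcol := ae_not_collision_of_lintegral_extendedU_ne_top hm hmeas hUtop
  have hU := integrable_U_of_lintegral_extendedU_ne_top hm hmeas hUtop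
  have hkin := (h.inD.integrableOn_sq hm).mono_set (s := Ioc 1 T) Ioc_subset_Ioi_self
  have hkinξ : IntegrableOn (fun t => minner m (φ' t + ξ' t) (φ' t + ξ' t)) (Ioc 1 T) :=
    ((h.inD.add hm hξ.inD).integrableOn_sq hm).mono_set Ioc_subset_Ioi_self
  have hle := (h.add_variation hm ha hξ hU hcol).hypInf_le
  rw [hξ1, add_zero, hmin, EReal.coe_le_coe_iff] at hle
  rw [h.lintegral_extendedLagrangian hm ha, NBodyHJ.lintegral_extendedLagrangian hm hkinξ hU hcol]
  refine ENNReal.ofReal_le_ofReal (sub_nonneg.1 ?_)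
  refine (nonneg_of_le_add_right hle).trans_eq ((integral_congr_ae (ae_of_all _ fun t => ?_)).trans
    (integral_sub ((hkinξ.div_const 2).add hU)
      ((hkin.div_const 2).add (h.integrableOn_U hm ha T))))
  simp only [lagrangianIncrement, minner_add_self]
  ring

end ExtendedLagrangian

/-! ### Random displacements of one body -/

/-- The displacement of the `i`-th body by `s`, corrected to keep the barycenter at the origin. -/
def recoil (m : Fin N → ℝ) (i : Fin N) : EuclideanSpace ℝ (Fin d) →L[ℝ] Conf d N :=
  ContinuousLinearMap.single ℝ (fun _ => EuclideanSpace ℝ (Fin d)) i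
    - ContinuousLinearMap.pi fun _ => (m i / ∑ k, m k) • ContinuousLinearMap.id ℝ _

section Recoil

lemma recoil_apply (m : Fin N → ℝ) (i : Fin N) (s : EuclideanSpace ℝ (Fin d)) :
    recoil m i s = Pi.single i s - fun _ => (m i / ∑ k, m k) • s := rfl

lemma measurable_kinetic_add_recoil (m : Fin N → ℝ) (i : Fin N) (v : Conf d N) (c : ℝ) :
    Measurable fun s =>
      ENNReal.ofReal (minner m (v + c • recoil m i s) (v + c • recoil m i s) / 2) :=
  (measurable_kinetic m).comp (by fun_prop : Measurable fun s => v + c • recoil m i s)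

lemma recoil_apply_sub (m : Fin N → ℝ) (i p q : Fin N) (s : EuclideanSpace ℝ (Fin d)) :
    recoil m i s p - recoil m i s q
      = (Pi.single i s : Conf d N) p - (Pi.single i s : Conf d N) q := by
  simp only [recoil_apply, Pi.sub_apply, sub_sub_sub_cancel_right]

lemma minner_const_right {m : Fin N → ℝ} {x : Conf d N} (hx : inX m x)
    (c : EuclideanSpace ℝ (Fin d)) : minner m x (fun _ => c) = 0 := by
  simp only [minner, ← real_inner_smul_left, ← sum_inner]
  rw [show ∑ i, m i • x i = 0 from hx, inner_zero_left]

variable {m : Fin N → ℝ} (hm : ∀ i, 0 < m i) (i : Fin N)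
include hm

lemma inX_recoil (s : EuclideanSpace ℝ (Fin d)) : inX m (recoil m i s) := by
  have hmass : 0 < ∑ k, m k := Finset.sum_pos (fun k _ => hm k) ⟨i, Finset.mem_univ i⟩
  simp only [inX, recoil_apply, Pi.sub_apply, smul_sub, Finset.sum_sub_distrib, ← Finset.sum_smul,
    Pi.single_apply, smul_ite, smul_zero, Finset.sum_ite_eq', Finset.mem_univ, if_true, smul_smul,
    ← Finset.sum_mul]
  rw [mul_div_cancel₀ _ hmass.ne', sub_self]

lemma minner_recoil_self_le (s : EuclideanSpace ℝ (Fin d)) :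
    minner m (recoil m i s) (recoil m i s) ≤ m i * ‖s‖ ^ 2 := by
  have hsplit : Pi.single i s = recoil m i s + fun _ => (m i / ∑ k, m k) • s := by
    rw [recoil_apply, sub_add_cancel]
  have hsingle : minner m (Pi.single i s : Conf d N) (Pi.single i s) = m i * ‖s‖ ^ 2 := by
    rw [minner, Finset.sum_eq_single i (fun k _ hk => by simp [Pi.single_eq_of_ne hk]) (by simp),
      Pi.single_eq_same, real_inner_self_eq_norm_sq]
  rw [← hsingle, hsplit, minner_add_self, minner_const_right (inX_recoil hm i s)]
  linarith [minner_self_nonneg hm (fun _ => (m i / ∑ k, m k) • s : Conf d N)]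

lemma kinetic_recoil_add_neg_le (v : Conf d N) (c : ℝ) (s : EuclideanSpace ℝ (Fin d)) :
    ENNReal.ofReal (minner m (v + c • recoil m i s) (v + c • recoil m i s) / 2)
        + ENNReal.ofReal (minner m (v + c • recoil m i (-s)) (v + c • recoil m i (-s)) / 2)
      ≤ 2 * (ENNReal.ofReal (minner m v v / 2) + ENNReal.ofReal (c ^ 2 * m i / 2) * ‖s‖ₑ ^ 2) := by
  have hmi := (hm i).le
  have hsum : 0 ≤ minner m v v / 2 + c ^ 2 * m i / 2 * ‖s‖ ^ 2 :=
    add_nonneg (kinetic_nonneg hm v) (by positivity)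
  rw [← ofReal_norm, ← ENNReal.ofReal_pow (norm_nonneg _), ← ENNReal.ofReal_mul (by positivity),
    ← ENNReal.ofReal_add (kinetic_nonneg hm _) (kinetic_nonneg hm _),
    ← ENNReal.ofReal_add (kinetic_nonneg hm _) (by positivity), two_mul,
    ← ENNReal.ofReal_add hsum hsum]
  refine ENNReal.ofReal_le_ofReal ?_
  have hrecoil := mul_le_mul_of_nonneg_left (minner_recoil_self_le hm i s) (sq_nonneg c)
  simp only [map_neg, smul_neg, minner_add_self, minner_neg_right, minner_comm m (-_),
    minner_smul_left, minner_smul_right]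
  linarith

lemma lintegral_kinetic_recoil_le (v : Conf d N) (c z : ℝ) :
    ∫⁻ s, ENNReal.ofReal (minner m (v + c • recoil m i s) (v + c • recoil m i s) / 2)
        ∂truncCauchy (EuclideanSpace ℝ (Fin d)) z
      ≤ ENNReal.ofReal (minner m v v / 2) + ENNReal.ofReal (c ^ 2 * m i / 2)
        * ∫⁻ s, ‖s‖ₑ ^ 2 ∂truncCauchy (EuclideanSpace ℝ (Fin d)) z := by
  set ν := truncCauchy (EuclideanSpace ℝ (Fin d)) z
  set f : EuclideanSpace ℝ (Fin d) → ℝ≥0∞ := fun s =>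
    ENNReal.ofReal (minner m (v + c • recoil m i s) (v + c • recoil m i s) / 2)
  have hf : Measurable f := measurable_kinetic_add_recoil m i v c
  refine (ENNReal.mul_le_mul_iff_right two_ne_zero ENNReal.ofNat_ne_top).1 ?_
  calc 2 * ∫⁻ s, f s ∂ν = ∫⁻ s, (f s + f (-s)) ∂ν := by
        rw [lintegral_add_left hf, lintegral_comp_neg_truncCauchy z hf, two_mul]
    _ ≤ ∫⁻ s, 2 * (ENNReal.ofReal (minner m v v / 2)
          + ENNReal.ofReal (c ^ 2 * m i / 2) * ‖s‖ₑ ^ 2) ∂ν :=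
        lintegral_mono fun s => kinetic_recoil_add_neg_le hm i v c s
    _ = 2 * (ENNReal.ofReal (minner m v v / 2) * ν univ
          + ENNReal.ofReal (c ^ 2 * m i / 2) * ∫⁻ s, ‖s‖ₑ ^ 2 ∂ν) := by
        rw [lintegral_const_mul' _ _ ENNReal.ofNat_ne_top, lintegral_add_left measurable_const,
          lintegral_const, lintegral_const_mul' _ _ ENNReal.ofReal_ne_top]
    _ ≤ _ := by
        gcongr
        exact mul_le_of_le_one_right' (truncCauchy_univ_le_one z)

end Recoil

section RecoilPotential

variable (m : Fin N → ℝ) (x : Conf d N) (h z : ℝ)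

lemma add_recoil_apply_sub (i p q : Fin N) (s : EuclideanSpace ℝ (Fin d)) :
    (x + h • recoil m i s) p - (x + h • recoil m i s) q
      = x p - x q + h • ((Pi.single i s : Conf d N) p - (Pi.single i s : Conf d N) q) := by
  rw [← recoil_apply_sub m, smul_sub]
  simp only [Pi.add_apply, Pi.smul_apply]
  abel

variable (hd : 2 ≤ d)
include hd

lemma lintegral_inv_dist_recoil_le_sqrt {i j : Fin N} (hij : i ≠ j) :
    ∫⁻ s, ‖(x + h • recoil m i s) i - (x + h • recoil m i s) j‖ₑ⁻¹
        ∂truncCauchy (EuclideanSpace ℝ (Fin d)) z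
      ≤ (ENNReal.ofReal √(‖x i - x j‖ ^ 2 + (h * z) ^ 2))⁻¹ := by
  simp only [add_recoil_apply_sub, Pi.single_eq_same, Pi.single_eq_of_ne hij.symm, sub_zero]
  exact lintegral_enorm_inv_truncCauchy_le (by simpa using hd) _ h z

lemma lintegral_inv_dist_recoil_le (i : Fin N) {p q : Fin N} (hpq : p ≠ q) :
    ∫⁻ s, ‖(x + h • recoil m i s) p - (x + h • recoil m i s) q‖ₑ⁻¹
        ∂truncCauchy (EuclideanSpace ℝ (Fin d)) z
      ≤ ‖x p - x q‖ₑ⁻¹ := by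
  have hsqrt (y : EuclideanSpace ℝ (Fin d)) :
      (ENNReal.ofReal √(‖y‖ ^ 2 + (h * z) ^ 2))⁻¹ ≤ ‖y‖ₑ⁻¹ := by
    rw [← ofReal_norm]
    exact ENNReal.inv_le_inv.2 (ENNReal.ofReal_le_ofReal
      (Real.le_sqrt_of_sq_le (le_add_of_nonneg_right (sq_nonneg _))))
  by_cases hp : p = i
  · subst hp
    exact (lintegral_inv_dist_recoil_le_sqrt m x h z hd hpq).trans (hsqrt _)
  by_cases hq : q = i
  · subst hq
    simpa only [enorm_sub_rev] using
      (lintegral_inv_dist_recoil_le_sqrt m x h z hd hpq.symm).trans (hsqrt _)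
  · simp only [add_recoil_apply_sub, Pi.single_eq_of_ne hp, Pi.single_eq_of_ne hq, sub_zero,
      smul_zero, add_zero, lintegral_const]
    exact mul_le_of_le_one_right' (truncCauchy_univ_le_one z)

lemma lintegral_extendedU_recoil_le {i j : Fin N} (hij : i < j) {D : ℝ≥0∞}
    (hD : (ENNReal.ofReal √(‖x i - x j‖ ^ 2 + (h * z) ^ 2))⁻¹ + D ≤ ‖x i - x j‖ₑ⁻¹) :
    ∫⁻ s, extendedU m (x + h • recoil m i s) ∂truncCauchy (EuclideanSpace ℝ (Fin d)) z
        + ENNReal.ofReal (m i * m j) * D ≤ extendedU m x := by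
  have hsum : ENNReal.ofReal (m i * m j) * D = ∑ p : Fin N, ∑ q : Fin N,
      if p = i ∧ q = j then ENNReal.ofReal (m i * m j) * D else 0 := by
    simp [ite_and]
  have hmeas (p q : Fin N) : Measurable fun s : EuclideanSpace ℝ (Fin d) =>
      if p < q then ENNReal.ofReal (m p * m q)
        * ‖(x + h • recoil m i s) p - (x + h • recoil m i s) q‖ₑ⁻¹ else 0 := by
    split_ifs
    · have : Measurable fun s : EuclideanSpace ℝ (Fin d) =>
        (x + h • recoil m i s) p - (x + h • recoil m i s) q := by fun_prop
      fun_prop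
    · exact measurable_const
  unfold extendedU
  rw [hsum, lintegral_finsetSum _ fun p _ => Finset.measurable_fun_sum _ fun q _ => hmeas p q,
    ← Finset.sum_add_distrib]
  refine Finset.sum_le_sum fun p _ => ?_
  rw [lintegral_finsetSum _ fun q _ => hmeas p q, ← Finset.sum_add_distrib]
  refine Finset.sum_le_sum fun q _ => ?_
  by_cases hpq : p < q
  · simp only [hpq, if_true]
    rw [lintegral_const_mul' _ _ ENNReal.ofReal_ne_top]
    by_cases hpair : p = i ∧ q = j
    · obtain ⟨rfl, rfl⟩ := hpair
      simp only [and_self, if_true, ← mul_add]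
      gcongr
      exact (add_le_add_left (lintegral_inv_dist_recoil_le_sqrt m x h z hd hij.ne) D).trans hD
    · simp only [hpair, if_false, add_zero]
      gcongr
      exact lintegral_inv_dist_recoil_le m x h z hd i hpq.ne
  · have hpair : ¬ (p = i ∧ q = j) := fun ⟨hp, hq⟩ => hpq (hp ▸ hq ▸ hij)
    simp [hpq, hpair]

lemma lintegral_extendedLagrangian_recoil_le (hm : ∀ i, 0 < m i) (v : Conf d N) (c : ℝ)
    {i j : Fin N} (hij : i < j) {D : ℝ≥0∞}
    (hD : (ENNReal.ofReal √(‖x i - x j‖ ^ 2 + (h * z) ^ 2))⁻¹ + D ≤ ‖x i - x j‖ₑ⁻¹) :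
    ∫⁻ s, extendedLagrangian m (x + h • recoil m i s) (v + c • recoil m i s)
          ∂truncCauchy (EuclideanSpace ℝ (Fin d)) z
        + ENNReal.ofReal (m i * m j) * D
      ≤ extendedLagrangian m x v + ENNReal.ofReal (c ^ 2 * m i / 2)
        * ∫⁻ s, ‖s‖ₑ ^ 2 ∂truncCauchy (EuclideanSpace ℝ (Fin d)) z := by
  simp only [extendedLagrangian]
  rw [lintegral_add_left (measurable_kinetic_add_recoil m i v c), add_assoc, add_right_comm]
  exact add_le_add (lintegral_kinetic_recoil_le hm i v c z)
    (lintegral_extendedU_recoil_le m x h z hd hij hD)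

end RecoilPotential

/-! ### Minimizers have no collisions -/

lemma sq_integral_le {α : Type*} [MeasurableSpace α] {μ : Measure α} [IsFiniteMeasure μ]
    {f : α → ℝ} (hf : MemLp f 2 μ) : (∫ t, f t ∂μ) ^ 2 ≤ μ.real univ * ∫ t, f t ^ 2 ∂μ := by
  have hint := hf.integrable one_le_two
  have hquad (c : ℝ) :
      0 ≤ μ.real univ * (c * c) + (-2 * ∫ t, f t ∂μ) * c + ∫ t, f t ^ 2 ∂μ := by
    calc 0 ≤ ∫ t, (f t - c) ^ 2 ∂μ := integral_nonneg fun t => sq_nonneg _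
      _ = ∫ t, (f t ^ 2 - 2 * c * f t + c ^ 2) ∂μ := by
          congr 1 with t
          ring
      _ = ∫ t, f t ^ 2 ∂μ - 2 * c * ∫ t, f t ∂μ + μ.real univ * c ^ 2 := by
          refine (integral_add (hf.integrable_sq.sub (hint.const_mul _))
            (integrable_const _)).trans ?_
          rw [integral_const, smul_eq_mul, ← integral_const_mul]
          exact congrArg (· + _) (integral_sub hf.integrable_sq (hint.const_mul _))
      _ = _ := by ring
  have := discrim_le_zero hquad
  rw [discrim] at this
  linarith

lemma sq_setIntegral_Ioc_le {f : ℝ → ℝ} {s t : ℝ} (hst : s ≤ t)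
    (hf : MemLp f 2 (volume.restrict (Ioc s t))) :
    (∫ r in Ioc s t, f r) ^ 2 ≤ (t - s) * ∫ r in Ioc s t, f r ^ 2 := by
  simpa [hst] using sq_integral_le hf

lemma eventually_norm_setIntegral_Ioc_le {E : Type*} [NormedAddCommGroup E] [NormedSpace ℝ E]
    {v : ℝ → E} {s T : ℝ} (hsT : s < T) (hv : MemLp v 2 (volume.restrict (Ioc s T)))
    {K κ : ℝ} (hK : 0 < K) (hκ : 0 < κ) :
    ∀ᶠ z in 𝓝[>] (0 : ℝ), ∀ t ∈ Ioc (T - K * z ^ 2) T, ‖∫ r in Ioc t T, v r‖ ≤ κ * z := by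
  have hlim : Tendsto (fun z : ℝ => K * z ^ 2) (𝓝[>] 0) (𝓝 0) := by
    have : ContinuousAt (fun z : ℝ => K * z ^ 2) 0 := by fun_prop
    simpa using this.tendsto.mono_left nhdsWithin_le_nhds
  have hvol : Tendsto (fun z => volume.restrict (Ioc s T) (Ioc (T - K * z ^ 2) T)) (𝓝[>] 0)
      (𝓝 0) := by
    refine tendsto_of_tendsto_of_tendsto_of_le_of_le tendsto_const_nhds
      (h := fun z => ENNReal.ofReal (K * z ^ 2)) ?_ (fun _ => zero_le) fun z => ?_
    · simpa using ENNReal.tendsto_ofReal hlim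
    · refine (Measure.restrict_apply_le _ _).trans_eq ?_
      rw [Real.volume_Ioc, sub_sub_cancel]
  have henergy := (hv.norm.integrable_sq).tendsto_setIntegral_nhds_zero hvol
  filter_upwards [self_mem_nhdsWithin, hlim.eventually_lt_const (sub_pos.2 hsT),
    henergy.eventually_lt_const (show 0 < κ ^ 2 / K by positivity)] with z hz hzs hze t ht
  have hz : 0 < z := hz
  have hst : s ≤ t := by linarith [ht.1]
  have hsub : Ioc t T ⊆ Ioc s T := Ioc_subset_Ioc_left hst
  have hvt : MemLp v 2 (volume.restrict (Ioc t T)) :=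
    hv.mono_measure (Measure.restrict_mono_set _ hsub)
  have hzs : s ≤ T - K * z ^ 2 := by linarith
  rw [Measure.restrict_restrict measurableSet_Ioc,
    inter_eq_left.2 (Ioc_subset_Ioc_left hzs)] at hze
  refine (norm_integral_le_integral_norm _).trans
    (le_of_sq_le_sq ?_ (by positivity))
  calc (∫ r in Ioc t T, ‖v r‖) ^ 2 ≤ (T - t) * ∫ r in Ioc t T, ‖v r‖ ^ 2 :=
        sq_setIntegral_Ioc_le ht.2 hvt.norm
    _ ≤ (T - t) * ∫ r in Ioc (T - K * z ^ 2) T, ‖v r‖ ^ 2 := by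
        gcongr ?_ * ?_
        · linarith [ht.2]
        · exact setIntegral_mono_set (hv.norm.integrable_sq.mono_measure
            (Measure.restrict_mono_set _ (Ioc_subset_Ioc_left hzs)))
            (ae_of_all _ fun r => sq_nonneg _) (Ioc_subset_Ioc_left ht.1.le).eventuallyLE
    _ ≤ K * z ^ 2 * (κ ^ 2 / K) := by
        gcongr
        linarith [ht.1]
    _ = (κ * z) ^ 2 := by
        field_simp

section Minimizer

variable {m : Fin N → ℝ} {a x : Conf d N} {φ φ' : ℝ → Conf d N} {V T : ℝ}

lemma InD.integral_Ioc (h : InD m 1 ⊤ φ φ') {s t : ℝ} (hs : 1 ≤ s) (hst : s ≤ t) :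
    ∫ r in Ioc s t, φ' r = φ t - φ s := by
  rw [h.eq_integral hs, h.eq_integral (hs.trans hst), eq_sub_iff_add_eq', ← setIntegral_union
    (Ioc_disjoint_Ioc_of_le le_rfl) measurableSet_Ioc (h.integrableOn s)
    ((h.integrableOn t).mono_set (Ioc_subset_Ioc_left hs)), Ioc_union_Ioc_eq_Ioc hs hst]

lemma InD.integral_Ioc_add_const (h : InD m 1 ⊤ φ φ') (a x : Conf d N) {s t : ℝ} (hs : 1 ≤ s)
    (hst : s ≤ t) : ∫ r in Ioc s t, (φ' r + a) = hypCurve a x φ t - hypCurve a x φ s := by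
  rw [integral_add ((h.integrableOn t).mono_set (Ioc_subset_Ioc_left hs)) (integrable_const a),
    h.integral_Ioc hs hst, setIntegral_const, Real.volume_real_Ioc_of_le hst, sub_smul]
  simp only [hypCurve]
  abel

lemma InD.memLp (hm : ∀ i, 0 < m i) (h : InD m 1 ⊤ φ φ') :
    MemLp φ' 2 (volume.restrict (Ioi 1)) := by
  obtain ⟨c, -, hc⟩ := exists_norm_sq_le_minner (d := d) hm
  refine (memLp_two_iff_integrable_sq_norm h.aestronglyMeasurable).2 ?_
  exact ((h.integrableOn_sq hm).const_mul c).mono' (h.aestronglyMeasurable.norm.pow 2)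
    (ae_of_all _ fun t => by simpa using hc (φ' t))

lemma InD.eventually_norm_sub_le_of_collision (hm : ∀ i, 0 < m i) (h : InD m 1 ⊤ φ φ')
    (hT : 1 < T) {i j : Fin N} (hcol : hypCurve a x φ T i = hypCurve a x φ T j)
    {K κ : ℝ} (hK : 0 < K) (hκ : 0 < κ) :
    ∀ᶠ z in 𝓝[>] (0 : ℝ), ∀ t ∈ Ioc (T - K * z ^ 2) T, 1 ≤ t →
      ‖hypCurve a x φ t i - hypCurve a x φ t j‖ ≤ κ * z := by
  have hv : MemLp (fun t => φ' t + a) 2 (volume.restrict (Ioc 1 T)) :=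
    ((h.memLp hm).mono_measure (Measure.restrict_mono_set _ Ioc_subset_Ioi_self)).add
      (memLp_const a)
  filter_upwards [eventually_norm_setIntegral_Ioc_le hT hv hK (half_pos hκ)] with z hz t ht ht1
  have hle := hz t ht
  rw [h.integral_Ioc_add_const a x ht1 ht.2, norm_sub_rev] at hle
  have hbody (k : Fin N) : dist (hypCurve a x φ t k) (hypCurve a x φ T k) ≤ κ / 2 * z := by
    rw [dist_eq_norm]
    exact (norm_le_pi_norm (hypCurve a x φ t - hypCurve a x φ T) k).trans hle
  rw [← dist_eq_norm]
  calc dist (hypCurve a x φ t i) (hypCurve a x φ t j)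
      ≤ κ / 2 * z + κ / 2 * z :=
        (dist_triangle_right _ _ (hypCurve a x φ T i)).trans
          (add_le_add (hbody i) (hcol ▸ hbody j))
    _ = κ * z := by ring

lemma inv_sqrt_add_le {r y y' : ℝ} (hr : 0 ≤ r) (hry : r ≤ y) (hy : 0 < y) (hy' : y ≤ y') :
    (ENNReal.ofReal √(r ^ 2 + y' ^ 2))⁻¹ + ENNReal.ofReal (1 / (5 * y))
      ≤ (ENNReal.ofReal r)⁻¹ := by
  rcases hr.eq_or_lt with rfl | hr
  · simp
  have hsqrt : 5 / 4 * r ≤ √(r ^ 2 + y' ^ 2) := Real.le_sqrt_of_sq_le (by nlinarith)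
  rw [← ENNReal.ofReal_inv_of_pos (lt_of_lt_of_le (by positivity) hsqrt),
    ← ENNReal.ofReal_inv_of_pos hr, ← ENNReal.ofReal_add (by positivity) (by positivity)]
  refine ENNReal.ofReal_le_ofReal ?_
  calc (√(r ^ 2 + y' ^ 2))⁻¹ + 1 / (5 * y) ≤ (5 / 4 * r)⁻¹ + 1 / (5 * r) := by gcongr
    _ = r⁻¹ := by
      field_simp
      norm_num

lemma InD.eventually_inv_sqrt_add_le_of_collision (hm : ∀ i, 0 < m i) (h : InD m 1 ⊤ φ φ')
    (hT : 1 < T) {i j : Fin N} (hcol : hypCurve a x φ T i = hypCurve a x φ T j)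
    {K κ : ℝ} (hK : 0 < K) (hκ : 0 < κ) {P : ℝ → ℝ} (hP : ∀ᶠ t in 𝓝[≤] T, κ ≤ P t) :
    ∀ᶠ z in 𝓝[>] (0 : ℝ), 1 ≤ T - K * z ^ 2 ∧ ∀ t,
      (ENNReal.ofReal √(‖hypCurve a x φ t i - hypCurve a x φ t j‖ ^ 2 + (P t * z) ^ 2))⁻¹
          + (Ioc (T - K * z ^ 2) T).indicator (fun _ => ENNReal.ofReal (1 / (5 * (κ * z)))) t
        ≤ ‖hypCurve a x φ t i - hypCurve a x φ t j‖ₑ⁻¹ := by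
  obtain ⟨s, hs, hsP⟩ := mem_nhdsLE_iff_exists_Ioc_subset.1 hP
  have hlim : Tendsto (fun z : ℝ => T - K * z ^ 2) (𝓝[>] 0) (𝓝 T) := by
    have : ContinuousAt (fun z : ℝ => T - K * z ^ 2) 0 := by fun_prop
    simpa using this.tendsto.mono_left nhdsWithin_le_nhds
  filter_upwards [h.eventually_norm_sub_le_of_collision hm hT hcol hK hκ, self_mem_nhdsWithin,
    hlim.eventually_const_lt hT, hlim.eventually_const_lt hs] with z hclose hz h1 hsz
  have hz : 0 < z := hz
  refine ⟨h1.le, fun t => ?_⟩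
  rw [← ofReal_norm]
  by_cases ht : t ∈ Ioc (T - K * z ^ 2) T
  · rw [indicator_of_mem ht]
    have hκP : κ ≤ P t := hsP ⟨hsz.trans ht.1, ht.2⟩
    exact inv_sqrt_add_le (norm_nonneg _) (hclose t ht (h1.trans ht.1).le) (by positivity)
      (by gcongr)
  · rw [indicator_of_notMem ht, add_zero, ENNReal.inv_le_inv]
    exact ENNReal.ofReal_le_ofReal (Real.le_sqrt_of_sq_le (le_add_of_nonneg_right (sq_nonneg _)))

lemma InD.aemeasurable_extendedLagrangian_recoil (h : InD m 1 ⊤ φ φ') (a x : Conf d N) (T : ℝ)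
    {P P' : ℝ → ℝ} (hP : Continuous P) (hP' : Continuous P') (i : Fin N)
    (ν : Measure (EuclideanSpace ℝ (Fin d))) :
    AEMeasurable (Function.uncurry fun s t => extendedLagrangian m
        (hypCurve a x φ t + P t • recoil m i s) (φ' t + P' t • recoil m i s))
      (ν.prod (volume.restrict (Ioc 1 T))) := by
  have hrecoil {Q : ℝ → ℝ} (hQ : Continuous Q) : Measurable
      fun p : EuclideanSpace ℝ (Fin d) × ℝ => Q p.2 • recoil m i p.1 :=
    (by fun_prop : Continuous fun p : EuclideanSpace ℝ (Fin d) × ℝ =>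
      Q p.2 • recoil m i p.1).measurable
  have hcurve : AEMeasurable (hypCurve a x φ) (volume.restrict (Ioc 1 T)) :=
    ((h.continuousOn_hypCurve a x T).mono Ioc_subset_Icc_self).aemeasurable measurableSet_Ioc
  have hvel : AEMeasurable φ' (volume.restrict (Ioc 1 T)) :=
    (h.integrableOn T).aestronglyMeasurable.aemeasurable
  exact ((measurable_kinetic m).comp_aemeasurable
    (hvel.comp_snd.add (hrecoil hP').aemeasurable)).add
    ((measurable_extendedU m).comp_aemeasurable (hcurve.comp_snd.add (hrecoil hP).aemeasurable))

lemma HasFiniteAction.lintegral_mul_measure_univ_le (hm : ∀ i, 0 < m i) (ha : ¬ collision a)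
    (h : HasFiniteAction m a x φ φ' V) (hmin : hypInf m a x ⊤ = (V : EReal)) {P P' : ℝ → ℝ}
    (hP : ∀ t, HasDerivAt P (P' t) t) (hP' : Continuous P') (hT : 1 ≤ T) (hP1 : P 1 = 0)
    (hPT : P T = 0) (i : Fin N) (ν : Measure (EuclideanSpace ℝ (Fin d))) [SFinite ν] :
    (∫⁻ t in Ioc 1 T, extendedLagrangian m (hypCurve a x φ t) (φ' t)) * ν univ
      ≤ ∫⁻ t in Ioc 1 T, ∫⁻ s, extendedLagrangian m (hypCurve a x φ t + P t • recoil m i s)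
          (φ' t + P' t • recoil m i s) ∂ν := by
  have hPc : Continuous P := continuous_iff_continuousAt.2 fun t => (hP t).continuousAt
  rw [← lintegral_lintegral_swap (h.inD.aemeasurable_extendedLagrangian_recoil a x T hPc hP' i ν),
    ← lintegral_const]
  refine lintegral_mono fun s => ?_
  refine (h.lintegral_extendedLagrangian_le hm ha hmin
    (variation_smul hm (inX_recoil hm i s) hP hP' hT hPT) ?_).trans_eq
    (setLIntegral_congr_fun measurableSet_Ioc fun t ht => ?_)
  · rw [indicator_Iic_of_le _ hT, hP1, zero_smul]
  · simp only [indicator_Iic_of_le _ ht.2]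

/-- The truncated mass `q = 2z/√π` pays for everything: averaging the displaced curves over the
law of total mass at least `1 - q` loses at most `q` times the action, the kinetic cost is of order
`q`, and the potential gains `D`. -/
lemma HasFiniteAction.lintegral_gain_le (hd : 2 ≤ d) (hm : ∀ i, 0 < m i) (ha : ¬ collision a)
    (h : HasFiniteAction m a x φ φ' V) (hmin : hypInf m a x ⊤ = (V : EReal)) {P P' : ℝ → ℝ}
    (hP : ∀ t, HasDerivAt P (P' t) t) (hP' : Continuous P') (hT : 1 ≤ T) (hP1 : P 1 = 0)
    (hPT : P T = 0) {C z : ℝ} (hC : ∀ t ∈ Ioc 1 T, P' t ^ 2 ≤ C) (hz : 0 < z) {i j : Fin N}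
    (hij : i < j) {D : ℝ → ℝ≥0∞} (hDm : Measurable D)
    (hD : ∀ t, (ENNReal.ofReal √(‖hypCurve a x φ t i - hypCurve a x φ t j‖ ^ 2
      + (P t * z) ^ 2))⁻¹ + D t ≤ ‖hypCurve a x φ t i - hypCurve a x φ t j‖ₑ⁻¹) :
    ENNReal.ofReal (m i * m j) * ∫⁻ t in Ioc 1 T, D t
      ≤ ENNReal.ofReal (2 / √π * z)
        * ((∫⁻ t in Ioc 1 T, extendedLagrangian m (hypCurve a x φ t) (φ' t))
          + ENNReal.ofReal (C * m i / 2) * (∫⁻ g, ‖g‖ₑ ^ 2 ∂gaussLaw (EuclideanSpace ℝ (Fin d)))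
            * volume (Ioc 1 T)) := by
  set A := ∫⁻ t in Ioc 1 T, extendedLagrangian m (hypCurve a x φ t) (φ' t) with hA
  set G := ∫⁻ g, ‖g‖ₑ ^ 2 ∂gaussLaw (EuclideanSpace ℝ (Fin d))
  set ν := truncCauchy (EuclideanSpace ℝ (Fin d)) z
  set q := ENNReal.ofReal (2 / √π * z)
  have hAtop : A * ν univ ≠ ⊤ := ENNReal.mul_ne_top
    (by rw [hA, h.lintegral_extendedLagrangian hm ha]; exact ENNReal.ofReal_ne_top)
    (measure_ne_top _ _)
  have hpoint : ∀ t ∈ Ioc 1 T, ∫⁻ s, extendedLagrangian m (hypCurve a x φ t + P t • recoil m i s)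
        (φ' t + P' t • recoil m i s) ∂ν + ENNReal.ofReal (m i * m j) * D t
      ≤ extendedLagrangian m (hypCurve a x φ t) (φ' t)
        + ENNReal.ofReal (C * m i / 2) * (q * G) := fun t ht => by
    refine (lintegral_extendedLagrangian_recoil_le m _ _ z hd hm _ _ hij (hD t)).trans ?_
    have := (hm i).le
    gcongr
    · exact hC t ht
    · exact lintegral_enorm_sq_truncCauchy_le hz
  refine (ENNReal.add_le_add_iff_left hAtop).1 ?_
  calc A * ν univ + ENNReal.ofReal (m i * m j) * ∫⁻ t in Ioc 1 T, D t
      ≤ ∫⁻ t in Ioc 1 T, (∫⁻ s, extendedLagrangian m (hypCurve a x φ t + P t • recoil m i s)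
          (φ' t + P' t • recoil m i s) ∂ν + ENNReal.ofReal (m i * m j) * D t) := by
        rw [lintegral_add_right _ (hDm.const_mul _), lintegral_const_mul _ hDm]
        gcongr
        exact h.lintegral_mul_measure_univ_le hm ha hmin hP hP' hT hP1 hPT i ν
    _ ≤ ∫⁻ t in Ioc 1 T, (extendedLagrangian m (hypCurve a x φ t) (φ' t)
          + ENNReal.ofReal (C * m i / 2) * (q * G)) :=
        setLIntegral_mono' measurableSet_Ioc hpoint
    _ = A * 1 + q * (ENNReal.ofReal (C * m i / 2) * G * volume (Ioc 1 T)) := by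
        rw [lintegral_add_right _ measurable_const, setLIntegral_const]
        ring
    _ ≤ A * (ν univ + q) + q * (ENNReal.ofReal (C * m i / 2) * G * volume (Ioc 1 T)) := by
        gcongr
        exact one_le_truncCauchy_univ_add z
    _ = A * ν univ + q * (A + ENNReal.ofReal (C * m i / 2) * G * volume (Ioc 1 T)) := by ring

lemma HasFiniteAction.exists_lintegral_gain_le (hd : 2 ≤ d) (hm : ∀ i, 0 < m i)
    (ha : ¬ collision a) (h : HasFiniteAction m a x φ φ' V) (hmin : hypInf m a x ⊤ = (V : EReal))
    {P P' : ℝ → ℝ} (hP : ∀ t, HasDerivAt P (P' t) t) (hP' : Continuous P') (hT : 1 ≤ T)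
    (hP1 : P 1 = 0) (hPT : P T = 0) {i j : Fin N} (hij : i < j) :
    ∃ M : ℝ, 0 ≤ M ∧ ∀ z > 0, ∀ D : ℝ → ℝ≥0∞, Measurable D →
      (∀ t, (ENNReal.ofReal √(‖hypCurve a x φ t i - hypCurve a x φ t j‖ ^ 2
        + (P t * z) ^ 2))⁻¹ + D t ≤ ‖hypCurve a x φ t i - hypCurve a x φ t j‖ₑ⁻¹) →
      ENNReal.ofReal (m i * m j) * ∫⁻ t in Ioc 1 T, D t ≤ ENNReal.ofReal (M * z) := by
  obtain ⟨C, hC⟩ := isCompact_Icc.exists_bound_of_continuousOn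
    (s := Icc 1 T) (f := fun t => P' t ^ 2) (by fun_prop)
  set Q := (∫⁻ t in Ioc 1 T, extendedLagrangian m (hypCurve a x φ t) (φ' t))
    + ENNReal.ofReal (C * m i / 2) * (∫⁻ g, ‖g‖ₑ ^ 2 ∂gaussLaw (EuclideanSpace ℝ (Fin d)))
      * volume (Ioc 1 T) with hQ
  have hQtop : Q ≠ ⊤ := by
    rw [hQ, h.lintegral_extendedLagrangian hm ha, Real.volume_Ioc]
    exact ENNReal.add_ne_top.2 ⟨ENNReal.ofReal_ne_top, ENNReal.mul_ne_top (ENNReal.mul_ne_top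
      ENNReal.ofReal_ne_top lintegral_enorm_sq_gaussLaw_ne_top) ENNReal.ofReal_ne_top⟩
  refine ⟨2 / √π * Q.toReal, by positivity, fun z hz D hDm hD => ?_⟩
  refine (h.lintegral_gain_le hd hm ha hmin hP hP' hT hP1 hPT
    (fun t ht => (le_abs_self _).trans (hC t (Ioc_subset_Icc_self ht))) hz hij hDm hD).trans_eq ?_
  rw [← hQ, mul_right_comm, ENNReal.ofReal_mul (q := Q.toReal) (by positivity),
    ENNReal.ofReal_toReal hQtop]

lemma HasFiniteAction.not_collision_of_isMin (hd : 2 ≤ d) (hm : ∀ i, 0 < m i)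
    (ha : ¬ collision a) (hx : ¬ collision x) (h : HasFiniteAction m a x φ φ' V)
    (hmin : hypInf m a x ⊤ = (V : EReal)) (hT : 1 ≤ T) : ¬ collision (hypCurve a x φ T) := by
  intro hcol
  obtain ⟨i, j, hij, hcol⟩ := hcol.exists_lt
  rcases hT.eq_or_lt with rfl | hT
  · exact hx ⟨i, j, hij.ne, by simpa [hypCurve, h.inD.1] using hcol⟩
  set κ := (T - 1) / 2 with hκ
  have hκ0 : 0 < κ := half_pos (sub_pos.2 hT)
  have hP (t : ℝ) : HasDerivAt (fun t => (t - 1) * (T + 1 - t)) (T + 2 - 2 * t) t :=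
    (((hasDerivAt_id t).sub_const 1).mul ((hasDerivAt_id t).const_sub (T + 1))).congr_deriv
      (by simp only [id]; ring)
  have hκP : ∀ᶠ t in 𝓝[≤] T, κ ≤ (t - 1) * (T + 1 - t) :=
    nhdsWithin_le_nhds ((hP T).continuousAt.eventually_const_le (by simp only; linarith))
  obtain ⟨M, hM, hcost⟩ := h.exists_lintegral_gain_le (T := T + 1) hd hm ha hmin hP (by fun_prop)
    (by linarith) (by simp) (by simp) hij
  have hi := hm i
  have hj := hm j
  have hK : 0 < (M + 1) * (5 * κ) / (m i * m j) := by positivity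
  obtain ⟨z, hz, h1z, hgain⟩ := ((eventually_mem_nhdsWithin (s := Ioi 0)).and
    (h.inD.eventually_inv_sqrt_add_le_of_collision hm hT hcol hK hκ0 hκP)).exists
  have hz : 0 < z := hz
  have hle := hcost z hz _ (measurable_const.indicator measurableSet_Ioc) hgain
  rw [setLIntegral_indicator measurableSet_Ioc,
    inter_eq_left.2 (Ioc_subset_Ioc h1z (le_add_of_nonneg_right zero_le_one)), setLIntegral_const,
    Real.volume_Ioc, sub_sub_cancel, ← ENNReal.ofReal_mul (by positivity),
    ← ENNReal.ofReal_mul (by positivity), ENNReal.ofReal_le_ofReal_iff (by positivity)] at hle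
  have hgain_eq : m i * m j * (1 / (5 * (κ * z)) * ((M + 1) * (5 * κ) / (m i * m j) * z ^ 2))
      = (M + 1) * z := by field_simp
  linarith

end Minimizer

/-! ### Expansion of the potential away from collisions -/

section Kepler

variable {F : Type*} [NormedAddCommGroup F] [InnerProductSpace ℝ F] {c : ℝ}

lemma one_div_norm_add_le (hc : 0 < c) {r e : F} (hr : c ≤ ‖r‖) (he : ‖e‖ ≤ c / 2) :
    1 / ‖r + e‖ ≤ 1 / ‖r‖ - ⟪r, e⟫ / ‖r‖ ^ 3 + 3 / c ^ 3 * ‖e‖ ^ 2 := by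
  have hlower : ‖r‖ - ‖e‖ ≤ ‖r + e‖ := norm_sub_le_norm_add r e
  have hupper : ‖r + e‖ ≤ ‖r‖ + ‖e‖ := norm_add_le r e
  have hinner : ⟪r, e⟫ = (‖r + e‖ ^ 2 - ‖r‖ ^ 2 - ‖e‖ ^ 2) / 2 := by
    rw [norm_add_sq_real r e]
    ring
  generalize ‖r + e‖ = u at *
  generalize ‖r‖ = ρ at *
  have hρ : 0 < ρ := hc.trans_le hr
  have hu : c / 2 ≤ u := by linarith
  have hu0 : 0 < u := (half_pos hc).trans_le hu
  have hcoeff : 1 / (2 * ρ ^ 3) + 1 / (ρ ^ 2 * u) ≤ 3 / c ^ 3 := by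
    calc 1 / (2 * ρ ^ 3) + 1 / (ρ ^ 2 * u) ≤ 1 / (2 * c ^ 3) + 1 / (c ^ 2 * (c / 2)) := by gcongr
      _ = 5 / 2 / c ^ 3 := by
        field_simp
        norm_num
      _ ≤ 3 / c ^ 3 := by
        gcongr
        norm_num
  calc 1 / u = 1 / ρ - ⟪r, e⟫ / ρ ^ 3 - ‖e‖ ^ 2 / (2 * ρ ^ 3)
        + (1 / (2 * ρ ^ 3) + 1 / (ρ ^ 2 * u)) * (u - ρ) ^ 2 := by
        rw [hinner]
        field_simp
        ring
    _ ≤ 1 / ρ - ⟪r, e⟫ / ρ ^ 3 + 3 / c ^ 3 * ‖e‖ ^ 2 := by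
        gcongr ?_ + ?_ * ?_
        · exact sub_le_self _ (by positivity)
        · exact sq_le_sq' (by linarith) (by linarith)

lemma mul_abs_one_div_cube_sub_le (hc : 0 < c) {ρ σ : ℝ} (hρ : c ≤ ρ) (hσ : c ≤ σ) :
    σ * |1 / ρ ^ 3 - 1 / σ ^ 3| ≤ 3 / c ^ 3 * |ρ - σ| := by
  have hρ0 := hc.trans_le hρ
  have hσ0 := hc.trans_le hσ
  have hfactor : 1 / ρ ^ 3 - 1 / σ ^ 3
      = -((1 / (ρ ^ 3 * σ) + 1 / (ρ ^ 2 * σ ^ 2) + 1 / (ρ * σ ^ 3)) * (ρ - σ)) := by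
    field_simp
    ring
  rw [hfactor, abs_neg, abs_mul, abs_of_pos (by positivity), ← mul_assoc]
  gcongr
  calc σ * (1 / (ρ ^ 3 * σ) + 1 / (ρ ^ 2 * σ ^ 2) + 1 / (ρ * σ ^ 3))
      = 1 / ρ ^ 3 + 1 / (ρ ^ 2 * σ) + 1 / (ρ * σ ^ 2) := by field_simp
    _ ≤ 1 / c ^ 3 + 1 / (c ^ 2 * c) + 1 / (c * c ^ 2) := by gcongr
    _ = 3 / c ^ 3 := by
      field_simp
      norm_num

lemma abs_inner_div_norm_cube_sub_le (hc : 0 < c) {r s : F} (hr : c ≤ ‖r‖) (hs : c ≤ ‖s‖)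
    (e : F) : |⟪r, e⟫ / ‖r‖ ^ 3 - ⟪s, e⟫ / ‖s‖ ^ 3| ≤ 4 / c ^ 3 * ‖r - s‖ * ‖e‖ := by
  calc |⟪r, e⟫ / ‖r‖ ^ 3 - ⟪s, e⟫ / ‖s‖ ^ 3|
      = |1 / ‖r‖ ^ 3 * ⟪r - s, e⟫ + (1 / ‖r‖ ^ 3 - 1 / ‖s‖ ^ 3) * ⟪s, e⟫| := by
        rw [inner_sub_left]
        ring_nf
    _ ≤ 1 / ‖r‖ ^ 3 * |⟪r - s, e⟫| + |1 / ‖r‖ ^ 3 - 1 / ‖s‖ ^ 3| * |⟪s, e⟫| := by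
        refine (abs_add_le _ _).trans_eq ?_
        rw [abs_mul, abs_mul, abs_of_nonneg (a := 1 / ‖r‖ ^ 3) (by positivity)]
    _ ≤ 1 / c ^ 3 * (‖r - s‖ * ‖e‖) + |1 / ‖r‖ ^ 3 - 1 / ‖s‖ ^ 3| * (‖s‖ * ‖e‖) := by
        gcongr <;> exact abs_real_inner_le_norm _ _
    _ = 1 / c ^ 3 * (‖r - s‖ * ‖e‖) + ‖s‖ * |1 / ‖r‖ ^ 3 - 1 / ‖s‖ ^ 3| * ‖e‖ := by ring
    _ ≤ 1 / c ^ 3 * (‖r - s‖ * ‖e‖) + 3 / c ^ 3 * ‖r - s‖ * ‖e‖ := by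
        gcongr ?_ + ?_ * _
        · exact le_rfl
        refine (mul_abs_one_div_cube_sub_le hc hr hs).trans ?_
        gcongr
        exact abs_norm_sub_norm_le r s
    _ = 4 / c ^ 3 * ‖r - s‖ * ‖e‖ := by ring

end Kepler

/-- The differential of the Newtonian potential. -/
def dU (m : Fin N → ℝ) (x : Conf d N) : Conf d N →L[ℝ] ℝ :=
  ∑ i, ∑ j, if i < j then -(m i * m j / ‖x i - x j‖ ^ 3) • (innerSL ℝ (x i - x j)).comp
    (ContinuousLinearMap.proj (R := ℝ) (φ := fun _ : Fin N => EuclideanSpace ℝ (Fin d)) i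
      - ContinuousLinearMap.proj j) else 0

/-- All mutual distances of `x` are at least `c`. -/
def Separated (c : ℝ) (x : Conf d N) : Prop := ∀ i j, i ≠ j → c ≤ ‖x i - x j‖

section Potential

variable {m : Fin N → ℝ} {c : ℝ} {x e : Conf d N}

lemma dU_apply (m : Fin N → ℝ) (x e : Conf d N) :
    dU m x e = ∑ i, ∑ j,
      if i < j then -(m i * m j * (⟪x i - x j, e i - e j⟫ / ‖x i - x j‖ ^ 3)) else 0 := by
  simp only [dU, sum_apply]
  refine Finset.sum_congr rfl fun i _ => Finset.sum_congr rfl fun j _ => ?_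
  split_ifs
  · simp only [smul_apply,
      ContinuousLinearMap.comp_apply, sub_apply,
      ContinuousLinearMap.proj_apply, innerSL_apply_apply, smul_eq_mul]
    ring
  · rfl

lemma continuousOn_dU {α : Type*} [TopologicalSpace α] {s : Set α} {γ ξ : α → Conf d N}
    (hγ : ContinuousOn γ s) (hξ : ContinuousOn ξ s) (hcol : ∀ t ∈ s, ¬ collision (γ t)) :
    ContinuousOn (fun t => dU m (γ t) (ξ t)) s := by
  simp only [dU_apply]
  refine continuousOn_finsetSum _ fun i _ => continuousOn_finsetSum _ fun j _ => ?_
  split_ifs with hij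
  · refine (continuousOn_const.mul (ContinuousOn.div (by fun_prop) (by fun_prop)
      fun t ht => ?_)).neg
    exact pow_ne_zero _ (norm_ne_zero_iff.2 (sub_ne_zero.2 fun h => hcol t ht ⟨i, j, hij.ne, h⟩))
  · exact continuousOn_const

lemma norm_apply_sub_apply_le (e : Conf d N) (i j : Fin N) : ‖e i - e j‖ ≤ 2 * ‖e‖ :=
  (norm_sub_le _ _).trans (by linarith [norm_le_pi_norm e i, norm_le_pi_norm e j])

lemma Separated.not_collision_add (hc : 0 < c) (hx : Separated c x) (he : ‖e‖ ≤ c / 4) :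
    ¬ collision (x + e) := by
  rintro ⟨i, j, hij, h⟩
  have hdist : x i - x j = e j - e i := by
    rw [sub_eq_sub_iff_add_eq_add, add_comm (e j)]
    exact h
  linarith [hdist ▸ hx i j hij, norm_apply_sub_apply_le e j i]

lemma exists_U_add_le (hm : ∀ i, 0 < m i) (hc : 0 < c) :
    ∃ C : ℝ, 0 ≤ C ∧ ∀ x e : Conf d N, Separated c x → ‖e‖ ≤ c / 4 →
      U m (x + e) ≤ U m x + dU m x e + C * ‖e‖ ^ 2 := by
  refine ⟨∑ i, ∑ j, if i < j then m i * m j * (3 / c ^ 3 * 2 ^ 2) else 0,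
    Finset.sum_nonneg fun i _ => Finset.sum_nonneg fun j _ => ?_, fun x e hx he => ?_⟩
  · have := (hm i).le
    have := (hm j).le
    split_ifs <;> positivity
  simp only [U, dU_apply, Finset.sum_mul, ← Finset.sum_add_distrib]
  refine Finset.sum_le_sum fun i _ => Finset.sum_le_sum fun j _ => ?_
  split_ifs with hij
  · have hpair := norm_apply_sub_apply_le e i j
    have hkepler := one_div_norm_add_le hc (hx i j hij.ne) (e := e i - e j) (by linarith)
    have hmass := mul_pos (hm i) (hm j)
    calc m i * m j / ‖(x + e) i - (x + e) j‖ = m i * m j * (1 / ‖x i - x j + (e i - e j)‖) := by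
          rw [Pi.add_apply, Pi.add_apply, add_sub_add_comm, mul_one_div]
      _ ≤ m i * m j * (1 / ‖x i - x j‖ - ⟪x i - x j, e i - e j⟫ / ‖x i - x j‖ ^ 3
            + 3 / c ^ 3 * (2 * ‖e‖) ^ 2) := by
          gcongr
          refine hkepler.trans ?_
          gcongr
      _ = _ := by ring
  · simp

lemma exists_abs_dU_sub_le (hm : ∀ i, 0 < m i) (hc : 0 < c) :
    ∃ K : ℝ, 0 ≤ K ∧ ∀ x y e : Conf d N, Separated c x → Separated c y →
      |dU m x e - dU m y e| ≤ K * ‖x - y‖ * ‖e‖ := by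
  refine ⟨∑ i, ∑ j, if i < j then m i * m j * (4 / c ^ 3 * 2 * 2) else 0,
    Finset.sum_nonneg fun i _ => Finset.sum_nonneg fun j _ => ?_, fun x y e hx hy => ?_⟩
  · have := (hm i).le
    have := (hm j).le
    split_ifs <;> positivity
  simp only [dU_apply, Finset.sum_mul, ← Finset.sum_sub_distrib]
  refine (Finset.abs_sum_le_sum_abs _ _).trans (Finset.sum_le_sum fun i _ =>
    (Finset.abs_sum_le_sum_abs _ _).trans (Finset.sum_le_sum fun j _ => ?_))
  split_ifs with hij
  · have hmass := mul_pos (hm i) (hm j)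
    have hxy : ‖(x i - x j) - (y i - y j)‖ ≤ 2 * ‖x - y‖ := by
      rw [sub_sub_sub_comm]
      exact norm_apply_sub_apply_le (x - y) i j
    rw [neg_sub_neg, ← mul_sub, abs_mul, abs_of_pos hmass, abs_sub_comm]
    calc m i * m j * |⟪x i - x j, e i - e j⟫ / ‖x i - x j‖ ^ 3
            - ⟪y i - y j, e i - e j⟫ / ‖y i - y j‖ ^ 3|
        ≤ m i * m j * (4 / c ^ 3 * (2 * ‖x - y‖) * (2 * ‖e‖)) := by
          gcongr
          refine (abs_inner_div_norm_cube_sub_le hc (hx i j hij.ne) (hy i j hij.ne) _).trans ?_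
          gcongr
          exact norm_apply_sub_apply_le e i j
      _ = _ := by ring
  · simp

lemma exists_separated {α : Type*} [TopologicalSpace α] {K : Set α} (hK : IsCompact K)
    {γ : α → Conf d N} (hγ : ContinuousOn γ K) (hcol : ∀ t ∈ K, ¬ collision (γ t)) :
    ∃ c > 0, ∀ t ∈ K, Separated c (γ t) := by
  have hpair (i j : Fin N) :
      ∀ᶠ c in 𝓝[>] (0 : ℝ), ∀ t ∈ K, i ≠ j → c ≤ ‖γ t i - γ t j‖ := by
    by_cases hij : i = j
    · exact Eventually.of_forall fun c t _ h => absurd hij h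
    obtain ⟨b, hb, hγb⟩ := hK.exists_forall_le' (f := fun t => ‖γ t i - γ t j‖) (a := 0)
      (by fun_prop) fun t ht =>
        norm_pos_iff.2 (sub_ne_zero.2 fun h => hcol t ht ⟨i, j, hij, h⟩)
    filter_upwards [nhdsWithin_le_nhds (Iio_mem_nhds hb)] with c hcb t ht _
    exact (le_of_lt hcb).trans (hγb t ht)
  have hall := eventually_all.2 fun i => eventually_all.2 fun j => hpair i j
  obtain ⟨c, hc, hsep⟩ := ((eventually_mem_nhdsWithin (s := Ioi (0 : ℝ))).and hall).exists
  exact ⟨c, hc, fun t ht i j => hsep i j t ht⟩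

end Potential

/-! ### First variation and the value function -/

/-- The first variation on `(1, T)` of the action along the curve `γ` with (renormalized) velocity
`φ'`, in the direction `ξ` with velocity `ξ'`. -/
def firstVariation (m : Fin N → ℝ) (T : ℝ) (γ φ' ξ ξ' : ℝ → Conf d N) : ℝ :=
  ∫ t in Ioc 1 T, (minner m (φ' t) (ξ' t) + dU m (γ t) (ξ t))

/-- The affine ramp from `w` at time `1` to `0` at time `T`, extended by `0`. -/
def ramp (T : ℝ) (w : Conf d N) : ℝ → Conf d N :=
  (Iic T).indicator fun t => ((T - t) / (T - 1)) • w

/-- The velocity of `ramp T w`. -/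
def rampVel (T : ℝ) (w : Conf d N) : ℝ → Conf d N :=
  (Iic T).indicator fun _ => (-1 / (T - 1)) • w

/-- The first variation in the direction of the ramp issuing from `w`; along a minimizer it is the
candidate derivative of the value function in the direction `w`. -/
def rampSlope (m : Fin N → ℝ) (T : ℝ) (γ φ' : ℝ → Conf d N) (w : Conf d N) : ℝ :=
  firstVariation m T γ φ' (ramp T w) (rampVel T w)

section Variation

variable {m : Fin N → ℝ} {T : ℝ} {γ φ φ' ξ ξ' ζ ζ' : ℝ → Conf d N}

lemma integrableOn_dU (hγ : ContinuousOn γ (Icc 1 T)) (hcol : ∀ t ∈ Icc 1 T, ¬ collision (γ t))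
    (hξ : Variation m T ξ ξ') : IntegrableOn (fun t => dU m (γ t) (ξ t)) (Ioc 1 T) :=
  (continuousOn_dU hγ (hξ.continuousOn T) hcol).integrableOn_Icc.mono_set Ioc_subset_Icc_self

lemma integrableOn_firstVariation (hm : ∀ i, 0 < m i) (h : InD m 1 ⊤ φ φ')
    (hγ : ContinuousOn γ (Icc 1 T)) (hcol : ∀ t ∈ Icc 1 T, ¬ collision (γ t))
    (hξ : Variation m T ξ ξ') :
    IntegrableOn (fun t => minner m (φ' t) (ξ' t) + dU m (γ t) (ξ t)) (Ioc 1 T) :=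
  ((integrableOn_minner hm h hξ).mono_set Ioc_subset_Ioi_self).add (integrableOn_dU hγ hcol hξ)

lemma firstVariation_add (hm : ∀ i, 0 < m i) (h : InD m 1 ⊤ φ φ')
    (hγ : ContinuousOn γ (Icc 1 T)) (hcol : ∀ t ∈ Icc 1 T, ¬ collision (γ t))
    (hξ : Variation m T ξ ξ') (hζ : Variation m T ζ ζ') :
    firstVariation m T γ φ' (fun t => ξ t + ζ t) (fun t => ξ' t + ζ' t)
      = firstVariation m T γ φ' ξ ξ' + firstVariation m T γ φ' ζ ζ' := by
  simp only [firstVariation, minner_add_right, map_add]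
  refine (integral_congr_ae (ae_of_all _ fun t => add_add_add_comm _ _ _ _)).trans ?_
  exact integral_add (integrableOn_firstVariation hm h hγ hcol hξ)
    (integrableOn_firstVariation hm h hγ hcol hζ)

lemma firstVariation_smul (c : ℝ) :
    firstVariation m T γ φ' (fun t => c • ξ t) (fun t => c • ξ' t)
      = c * firstVariation m T γ φ' ξ ξ' := by
  simp only [firstVariation, minner_smul_right, map_smul, smul_eq_mul, ← mul_add]
  exact integral_const_mul c _

lemma variation_ramp (hm : ∀ i, 0 < m i) (hT : 1 < T) {w : Conf d N} (hw : inX m w) :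
    Variation m T (ramp T w) (rampVel T w) :=
  variation_smul (P' := fun _ => -1 / (T - 1)) hm hw
    (fun t => ((hasDerivAt_id t).const_sub T).div_const _) continuous_const hT.le (by simp)

lemma ramp_one (hT : 1 < T) (w : Conf d N) : ramp T w 1 = w := by
  rw [ramp, indicator_Iic_of_le _ hT.le, div_self (sub_pos.2 hT).ne', one_smul]

lemma norm_ramp_le (hT : 1 < T) (w : Conf d N) {t : ℝ} (ht : t ∈ Icc 1 T) :
    ‖ramp T w t‖ ≤ ‖w‖ := by
  have hT1 : 0 < T - 1 := sub_pos.2 hT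
  rw [ramp, indicator_Iic_of_le _ ht.2, norm_smul,
    Real.norm_of_nonneg (div_nonneg (sub_nonneg.2 ht.2) hT1.le)]
  exact mul_le_of_le_one_left (norm_nonneg _) ((div_le_one hT1).2 (by linarith [ht.1]))

lemma integral_minner_rampVel (hT : 1 < T) (w : Conf d N) :
    ∫ t in Ioc 1 T, minner m (rampVel T w t) (rampVel T w t) = minner m w w / (T - 1) := by
  have hT1 : 0 < T - 1 := sub_pos.2 hT
  calc ∫ t in Ioc 1 T, minner m (rampVel T w t) (rampVel T w t)
      = ∫ _ in Ioc 1 T, minner m w w / (T - 1) ^ 2 :=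
        setIntegral_congr_fun measurableSet_Ioc fun t ht => by
          simp only [rampVel, indicator_Iic_of_le _ ht.2, minner_smul_left, minner_smul_right]
          field_simp
    _ = minner m w w / (T - 1) := by
        rw [setIntegral_const, Real.volume_real_Ioc_of_le hT.le, smul_eq_mul]
        field_simp

lemma rampSlope_add (hm : ∀ i, 0 < m i) (h : InD m 1 ⊤ φ φ') (hT : 1 < T)
    (hγ : ContinuousOn γ (Icc 1 T)) (hcol : ∀ t ∈ Icc 1 T, ¬ collision (γ t)) {w w' : Conf d N}
    (hw : inX m w) (hw' : inX m w') :
    rampSlope m T γ φ' (w + w') = rampSlope m T γ φ' w + rampSlope m T γ φ' w' := by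
  have hadd : ramp T (w + w') = fun t => ramp T w t + ramp T w' t := by
    simp only [ramp, smul_add]
    exact indicator_add _ _ _
  have hadd' : rampVel T (w + w') = fun t => rampVel T w t + rampVel T w' t := by
    simp only [rampVel, smul_add]
    exact indicator_add _ _ _
  rw [rampSlope, hadd, hadd', firstVariation_add hm h hγ hcol (variation_ramp hm hT hw)
    (variation_ramp hm hT hw')]
  rfl

lemma rampSlope_smul (c : ℝ) (w : Conf d N) :
    rampSlope m T γ φ' (c • w) = c * rampSlope m T γ φ' w := by
  have hsmul : ramp T (c • w) = fun t => c • ramp T w t := by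
    simp only [ramp, smul_comm _ c]
    exact indicator_const_smul _ _ _
  have hsmul' : rampVel T (c • w) = fun t => c • rampVel T w t := by
    simp only [rampVel, smul_comm _ c]
    exact indicator_const_smul _ _ _
  rw [rampSlope, hsmul, hsmul', firstVariation_smul]
  rfl

end Variation

lemma eq_zero_of_forall_nonneg_mul_add_sq {l q ε₀ : ℝ} (hε₀ : 0 < ε₀)
    (h : ∀ ε, |ε| ≤ ε₀ → 0 ≤ ε * l + q * ε ^ 2) : l = 0 := by
  have hderiv : HasDerivAt (fun ε : ℝ => ε * l + q * ε ^ 2) l 0 :=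
    (((hasDerivAt_id (0 : ℝ)).mul_const l).add
      (((hasDerivAt_id (0 : ℝ)).pow 2).const_mul q)).congr_deriv (by simp)
  refine IsLocalMin.hasDerivAt_eq_zero ?_ hderiv
  filter_upwards [Metric.closedBall_mem_nhds (0 : ℝ) hε₀] with ε hε
  simpa using h ε (by simpa using hε)

section Minimizer

variable {m : Fin N → ℝ} {a x : Conf d N} {φ φ' ξ ξ' : ℝ → Conf d N} {V T : ℝ}

lemma HasFiniteAction.integral_lagrangianIncrement_le (hm : ∀ i, 0 < m i) (ha : ¬ collision a)
    (h : HasFiniteAction m a x φ φ' V) (hT : 1 ≤ T)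
    (hcol : ∀ t ∈ Icc 1 T, ¬ collision (hypCurve a x φ t)) (hξ : Variation m T ξ ξ')
    (hU : IntegrableOn (fun t => U m (hypCurve a x φ t + ξ t)) (Ioc 1 T)) {B : ℝ}
    (hB : ∀ t ∈ Icc 1 T, U m (hypCurve a x φ t + ξ t)
      ≤ U m (hypCurve a x φ t) + dU m (hypCurve a x φ t) (ξ t) + B) :
    ∫ t in Ioc 1 T, lagrangianIncrement m (hypCurve a x φ) φ' ξ ξ' t
      ≤ firstVariation m T (hypCurve a x φ) φ' ξ ξ'
        + (∫ t in Ioc 1 T, minner m (ξ' t) (ξ' t)) / 2 + (T - 1) * B := by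
  have hfirst := integrableOn_firstVariation hm h.inD (h.inD.continuousOn_hypCurve a x T) hcol hξ
  have hsecond : IntegrableOn (fun t => minner m (ξ' t) (ξ' t) / 2) (Ioc 1 T) :=
    ((hξ.inD.integrableOn_sq hm).mono_set Ioc_subset_Ioi_self).div_const 2
  have hconst : ∫ _ in Ioc 1 T, B = (T - 1) * B := by
    rw [setIntegral_const, Real.volume_real_Ioc_of_le hT, smul_eq_mul]
  rw [firstVariation, ← integral_div, ← integral_add hfirst hsecond, ← hconst]
  refine le_of_le_of_eq (setIntegral_mono_on (h.integrableOn_lagrangianIncrement hm ha hξ hU)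
    ((hfirst.add hsecond).add (integrable_const B)) measurableSet_Ioc fun t ht => ?_)
    (integral_add (hfirst.add hsecond) (integrable_const B))
  have hBt := hB t (Ioc_subset_Icc_self ht)
  simp only [lagrangianIncrement, Pi.add_apply]
  linarith

lemma HasFiniteAction.exists_hypInf_add_le_firstVariation (hm : ∀ i, 0 < m i)
    (ha : ¬ collision a) (h : HasFiniteAction m a x φ φ' V) (hT : 1 ≤ T)
    (hcol : ∀ t ∈ Icc 1 T, ¬ collision (hypCurve a x φ t)) :
    ∃ C : ℝ, 0 ≤ C ∧ ∃ δ > 0, ∀ (ξ ξ' : ℝ → Conf d N) (M : ℝ), Variation m T ξ ξ' →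
      (∀ t ∈ Icc 1 T, ‖ξ t‖ ≤ M) → M ≤ δ →
      hypInf m a (x + ξ 1) ⊤ ≤ ((V + (firstVariation m T (hypCurve a x φ) φ' ξ ξ'
        + (∫ t in Ioc 1 T, minner m (ξ' t) (ξ' t)) / 2 + C * M ^ 2) : ℝ) : EReal) := by
  have hγ := h.inD.continuousOn_hypCurve a x T
  obtain ⟨c, hc, hsep⟩ := exists_separated isCompact_Icc hγ hcol
  obtain ⟨C, hC, hUle⟩ := exists_U_add_le (d := d) hm hc
  refine ⟨(T - 1) * C, mul_nonneg (sub_nonneg.2 hT) hC, c / 4, by positivity,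
    fun ξ ξ' M hξ hM hMδ => ?_⟩
  have hcol' : ∀ t ∈ Icc 1 T, ¬ collision (hypCurve a x φ t + ξ t) := fun t ht =>
    (hsep t ht).not_collision_add hc ((hM t ht).trans hMδ)
  have hU := integrableOn_U_comp m (hγ.add (hξ.continuousOn T)) hcol'
  have hae : ∀ᵐ t ∂volume.restrict (Ioc 1 T), ¬ collision (hypCurve a x φ t + ξ t) :=
    (ae_restrict_mem measurableSet_Ioc).mono fun t ht => hcol' t (Ioc_subset_Icc_self ht)
  refine (h.add_variation hm ha hξ hU hae).hypInf_le.trans (EReal.coe_le_coe_iff.2 ?_)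
  rw [mul_assoc]
  refine add_le_add_right (h.integral_lagrangianIncrement_le hm ha hT hcol hξ hU
    fun t ht => (hUle _ _ (hsep t ht) ((hM t ht).trans hMδ)).trans ?_) V
  have := hM t ht
  gcongr

lemma HasFiniteAction.firstVariation_eq_zero (hm : ∀ i, 0 < m i) (ha : ¬ collision a)
    (h : HasFiniteAction m a x φ φ' V) (hmin : hypInf m a x ⊤ = (V : EReal)) (hT : 1 ≤ T)
    (hcol : ∀ t ∈ Icc 1 T, ¬ collision (hypCurve a x φ t)) (hξ : Variation m T ξ ξ')
    (hξ1 : ξ 1 = 0) : firstVariation m T (hypCurve a x φ) φ' ξ ξ' = 0 := by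
  obtain ⟨C, -, δ, hδ, hle⟩ := h.exists_hypInf_add_le_firstVariation hm ha hT hcol
  obtain ⟨M, hM⟩ := isCompact_Icc.exists_bound_of_continuousOn (hξ.continuousOn T)
  have hM1 : 0 < max M 1 := lt_max_of_lt_right one_pos
  refine eq_zero_of_forall_nonneg_mul_add_sq (ε₀ := δ / max M 1)
    (q := (∫ t in Ioc 1 T, minner m (ξ' t) (ξ' t)) / 2 + C * max M 1 ^ 2) (by positivity)
    fun ε hε => ?_
  have hnorm : ∀ t ∈ Icc 1 T, ‖ε • ξ t‖ ≤ |ε| * max M 1 := fun t ht => by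
    rw [norm_smul, Real.norm_eq_abs]
    have := (hM t ht).trans (le_max_left M 1)
    gcongr
  have hεle := hle _ _ _ (hξ.smul hm ε) hnorm ((le_div_iff₀ hM1).1 hε)
  simp only [hξ1, smul_zero, add_zero, hmin, EReal.coe_le_coe_iff, firstVariation_smul,
    minner_smul_left, minner_smul_right, integral_const_mul, mul_pow, sq_abs] at hεle
  linarith

lemma HasFiniteAction.firstVariation_eq_rampSlope (hm : ∀ i, 0 < m i) (ha : ¬ collision a)
    (h : HasFiniteAction m a x φ φ' V) (hmin : hypInf m a x ⊤ = (V : EReal)) (hT : 1 < T)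
    (hcol : ∀ t ∈ Icc 1 T, ¬ collision (hypCurve a x φ t)) (hξ : Variation m T ξ ξ') :
    firstVariation m T (hypCurve a x φ) φ' ξ ξ' = rampSlope m T (hypCurve a x φ) φ' (ξ 1) := by
  have hramp := (variation_ramp hm hT hξ.inX_one).smul hm (-1)
  have hzero := h.firstVariation_eq_zero hm ha hmin hT.le hcol (hξ.add hm hramp)
    (by rw [ramp_one hT, neg_one_smul, add_neg_cancel])
  rw [firstVariation_add hm h.inD (h.inD.continuousOn_hypCurve a x T) hcol hξ hramp,
    firstVariation_smul] at hzero
  rw [rampSlope]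
  linarith

lemma HasFiniteAction.exists_hypInf_add_le_rampSlope (hm : ∀ i, 0 < m i) (ha : ¬ collision a)
    (h : HasFiniteAction m a x φ φ' V) (hT : 1 < T)
    (hcol : ∀ t ∈ Icc 1 T, ¬ collision (hypCurve a x φ t)) :
    ∃ C : ℝ, 0 ≤ C ∧ ∃ δ > 0, ∀ w : Conf d N, inX m w → ‖w‖ ≤ δ →
      hypInf m a (x + w) ⊤
        ≤ ((V + rampSlope m T (hypCurve a x φ) φ' w + C * ‖w‖ ^ 2 : ℝ) : EReal) := by
  obtain ⟨C, hC, δ, hδ, hle⟩ := h.exists_hypInf_add_le_firstVariation hm ha hT.le hcol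
  have : 0 < T - 1 := sub_pos.2 hT
  have hmass : 0 ≤ ∑ i, m i := Finset.sum_nonneg fun i _ => (hm i).le
  refine ⟨(∑ i, m i) / (T - 1) / 2 + C, by positivity, δ, hδ, fun w hw hwδ => ?_⟩
  have hlew := hle _ _ ‖w‖ (variation_ramp hm hT hw) (fun t ht => norm_ramp_le hT w ht) hwδ
  rw [ramp_one hT, integral_minner_rampVel hT] at hlew
  refine hlew.trans (EReal.coe_le_coe_iff.2 ?_)
  have hkinetic : minner m w w / (T - 1) / 2 ≤ (∑ i, m i) * ‖w‖ ^ 2 / (T - 1) / 2 := by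
    gcongr
    exact minner_self_le hm w
  rw [rampSlope]
  linarith [hkinetic.trans_eq (show _ = (∑ i, m i) / (T - 1) / 2 * ‖w‖ ^ 2 by ring)]

end Minimizer

/-! ### Uniqueness for the Euler–Lagrange equations -/

section Uniqueness

variable {m : Fin N → ℝ} {a x : Conf d N} {φ φ' ψ ψ' ξ ξ' : ℝ → Conf d N} {r s t T K R : ℝ}

lemma InD.norm_sub_le_integral_norm (h : InD m 1 ⊤ φ φ') (hr : 1 ≤ r) {t₁ t₂ : ℝ}
    (hrt : r ≤ t₁) (ht : t₁ ≤ t₂) (hts : t₂ ≤ s) : ‖φ t₂ - φ t₁‖ ≤ ∫ τ in Ioc r s, ‖φ' τ‖ := by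
  rw [← h.integral_Ioc (hr.trans hrt) ht]
  exact (norm_integral_le_integral_norm _).trans (setIntegral_mono_set
    ((h.integrableOn s).mono_set (Ioc_subset_Ioc_left hr)).norm (ae_of_all _ fun _ => norm_nonneg _)
    (Ioc_subset_Ioc hrt hts).eventuallyLE)

lemma InD.sq_integral_norm_le (hm : ∀ i, 0 < m i) (h : InD m 1 ⊤ φ φ') {c : ℝ}
    (hc : ∀ x : Conf d N, ‖x‖ ^ 2 ≤ c * minner m x x) (hr : 1 ≤ r) (hrs : r ≤ s) :
    (∫ t in Ioc r s, ‖φ' t‖) ^ 2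
      ≤ (s - r) * (c * ∫ t in Ioc r s, minner m (φ' t) (φ' t)) := by
  have hsub : Ioc r s ⊆ Ioi 1 := fun t ht => hr.trans_lt ht.1
  have hL2 : MemLp (fun t => ‖φ' t‖) 2 (volume.restrict (Ioc r s)) :=
    ((h.memLp hm).mono_measure (Measure.restrict_mono_set _ hsub)).norm
  refine (sq_setIntegral_Ioc_le hrs hL2).trans
    (mul_le_mul_of_nonneg_left ?_ (sub_nonneg.2 hrs))
  rw [← integral_const_mul]
  exact integral_mono hL2.integrable_sq (((h.integrableOn_sq hm).mono_set hsub).const_mul c)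
    fun t => hc (φ' t)

lemma setIntegral_minner_indicator_Iic (m : Fin N → ℝ) (f g : ℝ → Conf d N) (hsT : s ≤ T) :
    ∫ t in Ioc r T, minner m (f t) ((Iic s).indicator g t)
      = ∫ t in Ioc r s, minner m (f t) (g t) := by
  have hind (t : ℝ) : minner m (f t) ((Iic s).indicator g t)
      = (Iic s).indicator (fun t => minner m (f t) (g t)) t := by
    by_cases ht : t ∈ Iic s
    · simp only [indicator_of_mem ht]
    · simp only [indicator_of_notMem ht, minner_zero_right]
  simp only [hind]
  rw [setIntegral_indicator_Iic, min_eq_right hsT]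

lemma integral_minner_sub_eq (hm : ∀ i, 0 < m i) (h : InD m 1 ⊤ φ φ') (k : InD m 1 ⊤ ψ ψ')
    (hφ : ∀ t ∈ Icc 1 T, ¬ collision (hypCurve a x φ t))
    (hψ : ∀ t ∈ Icc 1 T, ¬ collision (hypCurve a x ψ t)) (hξ : Variation m T ξ ξ')
    (heq : firstVariation m T (hypCurve a x φ) φ' ξ ξ'
      = firstVariation m T (hypCurve a x ψ) ψ' ξ ξ') :
    ∫ t in Ioc 1 T, minner m (φ' t - ψ' t) (ξ' t)
      = ∫ t in Ioc 1 T, (dU m (hypCurve a x ψ t) (ξ t) - dU m (hypCurve a x φ t) (ξ t)) := by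
  have hdUφ := integrableOn_dU (h.continuousOn_hypCurve a x T) hφ hξ
  have hdUψ := integrableOn_dU (k.continuousOn_hypCurve a x T) hψ hξ
  have hkφ := (integrableOn_minner hm h hξ).mono_set (s := Ioc 1 T) Ioc_subset_Ioi_self
  have hkψ := (integrableOn_minner hm k hξ).mono_set (s := Ioc 1 T) Ioc_subset_Ioi_self
  rw [firstVariation, firstVariation, integral_add hkφ hdUφ, integral_add hkψ hdUψ] at heq
  simp only [minner_sub_left]
  rw [integral_sub hkφ hkψ, integral_sub hdUψ hdUφ]
  linarith

/-- Testing the difference of the two Euler–Lagrange equations against the difference of the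
curves, cut off at time `s`. -/
lemma integral_minner_sub_le (hm : ∀ i, 0 < m i) (h : InD m 1 ⊤ φ φ') (k : InD m 1 ⊤ ψ ψ')
    (hφ : ∀ t ∈ Icc 1 T, ¬ collision (hypCurve a x φ t))
    (hψ : ∀ t ∈ Icc 1 T, ¬ collision (hypCurve a x ψ t))
    (heq : ∀ ξ ξ', Variation m T ξ ξ' → firstVariation m T (hypCurve a x φ) φ' ξ ξ'
      = firstVariation m T (hypCurve a x ψ) ψ' ξ ξ')
    (hK0 : 0 ≤ K) (hK : ∀ t ∈ Icc 1 T, ∀ e,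
      |dU m (hypCurve a x ψ t) e - dU m (hypCurve a x φ t) e| ≤ K * ‖φ t - ψ t‖ * ‖e‖)
    (hr : 1 ≤ r) (hrs : r ≤ s) (hsT : s ≤ T) (hagree : EqOn φ ψ (Icc 1 r))
    (hR : ∀ t ∈ Icc r s, ‖φ t - ψ t‖ ≤ R)
    (hR' : ∀ t ∈ Icc r s, ‖φ t - ψ t - (φ s - ψ s)‖ ≤ R) :
    ∫ t in Ioc r s, minner m (φ' t - ψ' t) (φ' t - ψ' t) ≤ (s - r) * (K * R * R) := by
  have hξ := (h.sub hm k).variation_indicator hm (hr.trans hrs) hsT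
  have hdU : ∀ t ∈ Ioc 1 T,
      dU m (hypCurve a x ψ t) ((Iic s).indicator (fun t => φ t - ψ t - (φ s - ψ s)) t)
        - dU m (hypCurve a x φ t) ((Iic s).indicator (fun t => φ t - ψ t - (φ s - ψ s)) t)
      ≤ (Ioc r s).indicator (fun _ => K * R * R) t := fun t ht => by
    refine ((le_abs_self _).trans (hK t (Ioc_subset_Icc_self ht) _)).trans ?_
    by_cases hts : t ∈ Ioc r s
    · rw [indicator_of_mem hts, indicator_Iic_of_le _ hts.2]
      have hRt := hR t (Ioc_subset_Icc_self hts)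
      have hRt' := hR' t (Ioc_subset_Icc_self hts)
      have hR0 := (norm_nonneg _).trans hRt
      gcongr
    · rw [indicator_of_notMem hts]
      rcases le_or_gt t r with htr | hrt
      · rw [hagree ⟨ht.1.le, htr⟩, sub_self, norm_zero, mul_zero, zero_mul]
      · rw [indicator_Iic_of_lt _ (not_le.1 fun hle => hts ⟨hrt, hle⟩), norm_zero, mul_zero]
  calc ∫ t in Ioc r s, minner m (φ' t - ψ' t) (φ' t - ψ' t)
      ≤ ∫ t in Ioc 1 s, minner m (φ' t - ψ' t) (φ' t - ψ' t) :=
        setIntegral_mono_set (((h.sub hm k).integrableOn_sq hm).mono_set Ioc_subset_Ioi_self)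
          (ae_of_all _ fun t => minner_self_nonneg hm _) (Ioc_subset_Ioc_left hr).eventuallyLE
    _ = ∫ t in Ioc 1 T, minner m (φ' t - ψ' t)
          ((Iic s).indicator (fun t => φ' t - ψ' t) t) :=
        (setIntegral_minner_indicator_Iic m _ _ hsT).symm
    _ ≤ ∫ t in Ioc 1 T, (Ioc r s).indicator (fun _ => K * R * R) t := by
        rw [integral_minner_sub_eq hm h k hφ hψ hξ (heq _ _ hξ)]
        exact setIntegral_mono_on ((integrableOn_dU (k.continuousOn_hypCurve a x T) hψ hξ).sub
          (integrableOn_dU (h.continuousOn_hypCurve a x T) hφ hξ))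
          ((integrable_const _).indicator measurableSet_Ioc) measurableSet_Ioc hdU
    _ = (s - r) * (K * R * R) := by
        rw [setIntegral_indicator measurableSet_Ioc, inter_eq_right.2 (Ioc_subset_Ioc hr hsT),
          setIntegral_const, Real.volume_real_Ioc_of_le hrs, smul_eq_mul]

lemma exists_abs_dU_hypCurve_sub_le (hm : ∀ i, 0 < m i) (h : InD m 1 ⊤ φ φ')
    (k : InD m 1 ⊤ ψ ψ') (hφ : ∀ t ∈ Icc 1 T, ¬ collision (hypCurve a x φ t))
    (hψ : ∀ t ∈ Icc 1 T, ¬ collision (hypCurve a x ψ t)) :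
    ∃ K, 0 ≤ K ∧ ∀ t ∈ Icc 1 T, ∀ e,
      |dU m (hypCurve a x ψ t) e - dU m (hypCurve a x φ t) e| ≤ K * ‖φ t - ψ t‖ * ‖e‖ := by
  obtain ⟨c₁, hc₁, hsep₁⟩ := exists_separated isCompact_Icc (h.continuousOn_hypCurve a x T) hφ
  obtain ⟨c₂, hc₂, hsep₂⟩ := exists_separated isCompact_Icc (k.continuousOn_hypCurve a x T) hψ
  obtain ⟨K, hK0, hK⟩ := exists_abs_dU_sub_le (d := d) hm (lt_min hc₁ hc₂)
  refine ⟨K, hK0, fun t ht e => ?_⟩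
  have hsub : hypCurve a x φ t - hypCurve a x ψ t = φ t - ψ t := by
    simp only [hypCurve]
    abel
  rw [abs_sub_comm, ← hsub]
  exact hK _ _ _ (fun i j hij => (min_le_left _ _).trans (hsep₁ t ht i j hij))
    fun i j hij => (min_le_right _ _).trans (hsep₂ t ht i j hij)

lemma exists_eqOn_extend (hm : ∀ i, 0 < m i) (h : InD m 1 ⊤ φ φ') (k : InD m 1 ⊤ ψ ψ')
    (hφ : ∀ t ∈ Icc 1 T, ¬ collision (hypCurve a x φ t))
    (hψ : ∀ t ∈ Icc 1 T, ¬ collision (hypCurve a x ψ t))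
    (heq : ∀ ξ ξ', Variation m T ξ ξ' → firstVariation m T (hypCurve a x φ) φ' ξ ξ'
      = firstVariation m T (hypCurve a x ψ) ψ' ξ ξ') :
    ∃ σ > 0, ∀ r s, 1 ≤ r → r ≤ s → s ≤ T → s ≤ r + σ → EqOn φ ψ (Icc 1 r) →
      EqOn φ ψ (Icc 1 s) := by
  obtain ⟨K, hK0, hK⟩ := exists_abs_dU_hypCurve_sub_le hm h k hφ hψ
  obtain ⟨c, hc, hnorm⟩ := exists_norm_sq_le_minner (d := d) hm
  obtain ⟨σ, hσ, hσ1⟩ : ∃ σ > 0, σ ^ 2 * (c * K) < 1 := by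
    have hlim : Tendsto (fun σ : ℝ => σ ^ 2 * (c * K)) (𝓝[>] 0) (𝓝 0) := by
      refine (Continuous.tendsto' (by fun_prop) 0 0 (by simp)).mono_left nhdsWithin_le_nhds
    exact ((eventually_mem_nhdsWithin (s := Ioi 0)).and
      (hlim.eventually_lt_const one_pos)).exists
  refine ⟨σ, hσ, fun r s hr hrs hsT hsσ hagree => ?_⟩
  have hδ := h.sub hm k
  set R := ∫ τ in Ioc r s, ‖φ' τ - ψ' τ‖
  have hR : ∀ t ∈ Icc r s, ‖φ t - ψ t‖ ≤ R := fun t ht => by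
    simpa [hagree ⟨hr, le_rfl⟩] using hδ.norm_sub_le_integral_norm hr le_rfl ht.1 ht.2
  have hR' : ∀ t ∈ Icc r s, ‖φ t - ψ t - (φ s - ψ s)‖ ≤ R := fun t ht =>
    (norm_sub_rev _ _).trans_le (hδ.norm_sub_le_integral_norm hr ht.1 ht.2 le_rfl)
  have hcontract : R ^ 2 ≤ σ ^ 2 * (c * K) * R ^ 2 := by
    have : 0 ≤ s - r := sub_nonneg.2 hrs
    calc R ^ 2 ≤ (s - r) * (c * ∫ t in Ioc r s, minner m (φ' t - ψ' t) (φ' t - ψ' t)) :=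
          hδ.sq_integral_norm_le hm hnorm hr hrs
      _ ≤ (s - r) * (c * ((s - r) * (K * R * R))) := by
          gcongr
          exact integral_minner_sub_le hm h k hφ hψ heq hK0 hK hr hrs hsT hagree hR hR'
      _ = (s - r) ^ 2 * (c * K) * R ^ 2 := by ring
      _ ≤ σ ^ 2 * (c * K) * R ^ 2 := by
          gcongr
          linarith
  have hRzero : R = 0 := by
    by_contra hne
    exact hcontract.not_gt (mul_lt_of_lt_one_left (by positivity) hσ1)
  intro t ht
  rcases le_total t r with htr | hrt
  · exact hagree ⟨ht.1, htr⟩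
  · exact sub_eq_zero.1 (norm_le_zero_iff.1 ((hR t ⟨hrt, ht.2⟩).trans_eq hRzero))

lemma eqOn_of_firstVariation_eq (hm : ∀ i, 0 < m i) (h : InD m 1 ⊤ φ φ') (k : InD m 1 ⊤ ψ ψ')
    (hT : 1 ≤ T) (hφ : ∀ t ∈ Icc 1 T, ¬ collision (hypCurve a x φ t))
    (hψ : ∀ t ∈ Icc 1 T, ¬ collision (hypCurve a x ψ t))
    (heq : ∀ ξ ξ', Variation m T ξ ξ' → firstVariation m T (hypCurve a x φ) φ' ξ ξ'
      = firstVariation m T (hypCurve a x ψ) ψ' ξ ξ') :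
    EqOn φ ψ (Icc 1 T) := by
  obtain ⟨σ, hσ, hextend⟩ := exists_eqOn_extend hm h k hφ hψ heq
  have hstep (n : ℕ) : EqOn φ ψ (Icc 1 (min (1 + n * σ) T)) := by
    induction n with
    | zero =>
      intro t ht
      rw [le_antisymm (by simpa [hT] using ht.2) ht.1, h.1, k.1]
    | succ n ih =>
      have hadd : (1 + (n + 1 : ℕ) * σ : ℝ) = 1 + n * σ + σ := by
        push_cast
        ring
      refine hextend (min (1 + n * σ) T) _ (le_min (le_add_of_nonneg_right (by positivity)) hT)
        ?_ (min_le_right _ _) ?_ ih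
      · rw [hadd]
        exact min_le_min_right T (le_add_of_nonneg_right hσ.le)
      · rw [hadd, ← min_add_add_right]
        exact min_le_min_left _ (le_add_of_nonneg_right hσ.le)
  obtain ⟨n, hn⟩ := exists_nat_ge (T / σ)
  have hnT : T ≤ 1 + n * σ := ((div_le_iff₀ hσ).1 hn).trans (le_add_of_nonneg_left zero_le_one)
  simpa only [min_eq_right hnT] using hstep n

end Uniqueness

/-! ### The singular set -/

lemma not_collision_smul_add_smul {a x : Conf d N} (ha : ¬ collision a)
    (hax : ∀ i j, i ≠ j → x i - x j ∉ Submodule.span ℝ {a i - a j}) {b c : ℝ}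
    (hbc : b ≠ 0 ∨ c ≠ 0) : ¬ collision (b • a + c • x) := by
  rcases eq_or_ne c 0 with rfl | hc
  · simpa only [zero_smul, add_zero] using not_collision_smul ha (hbc.resolve_right (· rfl))
  rintro ⟨i, j, hij, hcol⟩
  have hcx : c • (x i - x j) = -b • (a i - a j) := by
    simp only [Pi.add_apply, Pi.smul_apply] at hcol
    rw [← sub_eq_zero] at hcol ⊢
    rw [← hcol]
    module
  refine hax i j hij ((Submodule.smul_mem_iff _ hc).1 ?_)
  exact hcx ▸ Submodule.smul_mem _ _ (Submodule.mem_span_singleton_self _)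

-- A competitor with finite action: the segment from `x` to `2 • a`, followed by `t ↦ t • a`.
lemma hypInf_ne_top {m : Fin N → ℝ} (hm : ∀ i, 0 < m i) {a x : Conf d N} (ha : inOmega m a)
    (hx : inX m x) (hax : ∀ i j, i ≠ j → x i - x j ∉ Submodule.span ℝ {a i - a j}) :
    hypInf m a x ⊤ ≠ ⊤ := by
  have hramp := variation_ramp hm one_lt_two (hx.sub ha.1)
  have hcol : ∀ t ∈ Icc (1 : ℝ) 2, ¬ collision (hypCurve a a 0 t + ramp 2 (x - a) t) := by
    intro t ht
    have hcurve : hypCurve a a 0 t + ramp 2 (x - a) t = (2 * (t - 1)) • a + (2 - t) • x := by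
      rw [hypCurve, ramp, indicator_Iic_of_le _ ht.2, Pi.zero_apply]
      norm_num
      module
    rw [hcurve]
    refine not_collision_smul_add_smul ha.2 hax ?_
    by_contra! h
    linarith
  have hU := integrableOn_U_comp m (((hasFiniteAction_zero hm ha.2).inD.continuousOn_hypCurve
    a a 2).add (hramp.continuousOn 2)) hcol
  have hle := ((hasFiniteAction_zero hm ha.2).add_variation hm ha.2 hramp hU
    ((ae_restrict_mem measurableSet_Ioc).mono fun t ht =>
      hcol t (Ioc_subset_Icc_self ht))).hypInf_le
  rw [ramp_one one_lt_two, add_sub_cancel] at hle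
  exact ne_top_of_le_ne_top (EReal.coe_ne_top _) hle

/-- The mass-weighted sum `x ↦ ∑ i, m i • x i`, whose kernel is the configuration space `X`. -/
def massSum (d : ℕ) (m : Fin N → ℝ) : Conf d N →ₗ[ℝ] EuclideanSpace ℝ (Fin d) :=
  ∑ i, m i • LinearMap.proj i

lemma mem_ker_massSum {m : Fin N → ℝ} {x : Conf d N} :
    x ∈ LinearMap.ker (massSum d m) ↔ inX m x := by
  simp [massSum, inX]

lemma massSum_single (m : Fin N → ℝ) (i : Fin N) (u : EuclideanSpace ℝ (Fin d)) :
    massSum d m (Pi.single i u) = m i • u := by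
  have hsingle (j : Fin N) (hj : j ≠ i) : m j • (Pi.single i u : Conf d N) j = 0 := by
    rw [Pi.single_eq_of_ne hj, smul_zero]
  simpa [massSum] using Finset.sum_eq_single i (fun j _ => hsingle j) (by simp)

lemma finrank_ker_massSum (hN : 0 < N) {m : Fin N → ℝ} (hm : ∀ i, 0 < m i) :
    Module.finrank ℝ (LinearMap.ker (massSum d m)) = d * (N - 1) := by
  have hsurj : Function.Surjective (massSum d m) := fun u =>
    ⟨Pi.single ⟨0, hN⟩ ((m ⟨0, hN⟩)⁻¹ • u), by
      rw [massSum_single, smul_inv_smul₀ (hm _).ne']⟩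
  have hrank := (massSum d m).finrank_range_add_finrank_ker
  rw [LinearMap.range_eq_top.2 hsurj, finrank_top, finrank_euclideanSpace_fin,
    Module.finrank_pi_fintype] at hrank
  simp only [finrank_euclideanSpace_fin, Finset.sum_const, Finset.card_univ, Fintype.card_fin,
    smul_eq_mul] at hrank
  rw [Nat.mul_sub_one, mul_comm d N]
  omega

lemma exists_range_eq_setOf_inX (hN : 0 < N) {m : Fin N → ℝ} (hm : ∀ i, 0 < m i) :
    ∃ g : EuclideanSpace ℝ (Fin (d * (N - 1))) →L[ℝ] Conf d N,
      range g = {w : Conf d N | inX m w} := by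
  let e : EuclideanSpace ℝ (Fin (d * (N - 1))) ≃ₗ[ℝ] LinearMap.ker (massSum d m) :=
    .ofFinrankEq _ _ (finrank_euclideanSpace_fin.trans (finrank_ker_massSum hN hm).symm)
  refine ⟨LinearMap.toContinuousLinearMap ((LinearMap.ker (massSum d m)).subtype ∘ₗ e), ?_⟩
  ext w
  rw [mem_ofPred_eq, ← mem_ker_massSum]
  exact ⟨fun ⟨z, hz⟩ => hz ▸ (e z).2, fun hw => ⟨e.symm ⟨w, hw⟩, by simp⟩⟩

/-- The configurations of `X` whose pair `(i, j)` is aligned with that of `a`. -/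
def alignedSubmodule (m : Fin N → ℝ) (a : Conf d N) (i j : Fin N) : Submodule ℝ (Conf d N) :=
  LinearMap.ker (massSum d m) ⊓
    (Submodule.span ℝ {a i - a j}).comap
      (LinearMap.proj (R := ℝ) (φ := fun _ => EuclideanSpace ℝ (Fin d)) i - LinearMap.proj j)

lemma finrank_alignedSubmodule_lt (hd : 2 ≤ d) {m : Fin N → ℝ} (hm : ∀ i, 0 < m i)
    (a : Conf d N) {i j : Fin N} (hij : i ≠ j) :
    Module.finrank ℝ (alignedSubmodule m a i j)
      < Module.finrank ℝ (LinearMap.ker (massSum d m)) := by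
  obtain ⟨u, hu⟩ : ∃ u, u ∉ Submodule.span ℝ {a i - a j} := by
    by_contra! hspan
    have hle := finrank_span_le_card (R := ℝ) {a i - a j}
    rw [Submodule.eq_top_iff'.2 hspan, finrank_top, finrank_euclideanSpace_fin,
      toFinset_singleton, Finset.card_singleton] at hle
    omega
  refine Submodule.finrank_lt_finrank_of_lt (lt_of_le_not_ge inf_le_left fun hle => ?_)
  have hker : (Pi.single i (m j • u) - Pi.single j (m i • u) : Conf d N)
      ∈ LinearMap.ker (massSum d m) := by
    rw [LinearMap.mem_ker, map_sub, massSum_single, massSum_single, smul_comm, sub_self]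
  have hmem : (m j + m i) • u ∈ Submodule.span ℝ {a i - a j} := by
    simpa [hij, hij.symm, add_smul] using (hle hker).2
  exact hu ((Submodule.smul_mem_iff _ (add_pos (hm j) (hm i)).ne').1 hmem)

section Superdifferential

variable {F : Type*} [NormedAddCommGroup F] [InnerProductSpace ℝ F] {m : Fin N → ℝ}
  {a x : Conf d N} {φ φ' ψ ψ' : ℝ → Conf d N} {V T : ℝ} {g : F →L[ℝ] Conf d N}

lemma exists_inner_eq_rampSlope [FiniteDimensional ℝ F] (hm : ∀ i, 0 < m i)
    (h : InD m 1 ⊤ φ φ') (hT : 1 < T) (hcol : ∀ t ∈ Icc 1 T, ¬ collision (hypCurve a x φ t))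
    (hg : ∀ w, inX m (g w)) :
    ∃ p : F, ∀ w, ⟪p, w⟫ = rampSlope m T (hypCurve a x φ) φ' (g w) := by
  have : CompleteSpace F := FiniteDimensional.complete ℝ F
  let slope : F →ₗ[ℝ] ℝ :=
    { toFun := fun w => rampSlope m T (hypCurve a x φ) φ' (g w)
      map_add' := fun w w' => by
        rw [map_add, rampSlope_add hm h hT (h.continuousOn_hypCurve a x T) hcol (hg w) (hg w')]
      map_smul' := fun c w => by rw [map_smul, rampSlope_smul]; rfl }
  exact ⟨(InnerProductSpace.toDual ℝ F).symm (LinearMap.toContinuousLinearMap slope),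
    fun w => InnerProductSpace.toDual_symm_apply⟩

lemma HasFiniteAction.hasSuperdiffWithinAt (hm : ∀ i, 0 < m i) (ha : ¬ collision a) {z p : F}
    (h : HasFiniteAction m a (g z) φ φ' V) (hmin : hypInf m a (g z) ⊤ = (V : EReal))
    (hT : 1 < T) (hcol : ∀ t ∈ Icc 1 T, ¬ collision (hypCurve a (g z) φ t))
    (hg : ∀ w, inX m (g w)) (hp : ∀ w, ⟪p, w⟫ = rampSlope m T (hypCurve a (g z) φ) φ' (g w))
    {S : Set F} (hS : ∀ y ∈ S, hypInf m a (g y) ⊤ ≠ ⊥) :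
    HasSuperdiffWithinAt (fun y => (hypInf m a (g y) ⊤).toReal) p S z := by
  intro ε hε
  obtain ⟨C, hC, δ, hδ, hle⟩ := h.exists_hypInf_add_le_rampSlope hm ha hT hcol
  have hnear : ∀ᶠ y in 𝓝 z, ‖g (y - z)‖ < δ :=
    ContinuousAt.eventually_lt (by fun_prop) continuousAt_const (by simpa)
  have hsmall : ∀ᶠ y in 𝓝 z, C * ‖g (y - z)‖ * ‖g‖ < ε :=
    ContinuousAt.eventually_lt (by fun_prop) continuousAt_const (by simpa)
  filter_upwards [nhdsWithin_le_nhds hnear, nhdsWithin_le_nhds hsmall, self_mem_nhdsWithin]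
    with y hδy hεy hyS
  have hley := hle (g (y - z)) (hg _) hδy.le
  rw [← map_add, add_sub_cancel] at hley
  have hquad : C * ‖g (y - z)‖ ^ 2 ≤ ε * ‖y - z‖ :=
    calc C * ‖g (y - z)‖ ^ 2 = C * ‖g (y - z)‖ * ‖g (y - z)‖ := by ring
      _ ≤ C * ‖g (y - z)‖ * (‖g‖ * ‖y - z‖) := by gcongr; exact g.le_opNorm _
      _ = C * ‖g (y - z)‖ * ‖g‖ * ‖y - z‖ := by ring
      _ ≤ ε * ‖y - z‖ := by gcongr
  have hval := EReal.toReal_le_toReal hley (hS y hyS) (EReal.coe_ne_top _)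
  rw [EReal.toReal_coe] at hval
  rw [hmin, EReal.toReal_coe, hp]
  linarith

lemma HasFiniteAction.eqOn_of_rampSlope_eq (hm : ∀ i, 0 < m i)
    (ha : ¬ collision a) (h : HasFiniteAction m a x φ φ' V) (k : HasFiniteAction m a x ψ ψ' V)
    (hmin : hypInf m a x ⊤ = (V : EReal)) (hT : 1 < T)
    (hφ : ∀ t ∈ Icc 1 T, ¬ collision (hypCurve a x φ t))
    (hψ : ∀ t ∈ Icc 1 T, ¬ collision (hypCurve a x ψ t))
    (heq : ∀ w, inX m w →
      rampSlope m T (hypCurve a x φ) φ' w = rampSlope m T (hypCurve a x ψ) ψ' w) :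
    EqOn φ ψ (Icc 1 T) :=
  eqOn_of_firstVariation_eq hm h.inD k.inD hT.le hφ hψ fun ξ ξ' hξ => by
    rw [h.firstVariation_eq_rampSlope hm ha hmin hT hφ hξ,
      k.firstVariation_eq_rampSlope hm ha hmin hT hψ hξ, heq _ hξ.inX_one]

lemma hypInf_ne_bot_of_mem_singularSet (hx : x ∈ singularSet m a) : hypInf m a x ⊤ ≠ ⊥ := by
  obtain ⟨-, φ, φ', -, -, -, -, hφ, -⟩ := hx
  rw [← hφ, hypAction]
  split_ifs
  exacts [EReal.coe_ne_bot _, top_ne_bot]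

lemma exists_two_superdifferentials [FiniteDimensional ℝ F] (hd : 2 ≤ d) (hm : ∀ i, 0 < m i)
    (ha : ¬ collision a) (hg : range g = {w : Conf d N | inX m w}) {S : Set F}
    (hS : S ⊆ g ⁻¹' singularSet m a) {z : F} (hz : z ∈ S) (hfin : hypInf m a (g z) ⊤ ≠ ⊤) :
    ∃ p₁ p₂ : F, p₁ ≠ p₂ ∧
      HasSuperdiffWithinAt (fun y => (hypInf m a (g y) ⊤).toReal) p₁ S z ∧
      HasSuperdiffWithinAt (fun y => (hypInf m a (g y) ⊤).toReal) p₂ S z := by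
  have hgX : ∀ w, inX m (g w) := fun w => hg.subset (mem_range_self w)
  have hbot : ∀ y ∈ S, hypInf m a (g y) ⊤ ≠ ⊥ := fun y hy =>
    hypInf_ne_bot_of_mem_singularSet (hS hy)
  have hmin := (EReal.coe_toReal hfin (hbot z hz)).symm
  obtain ⟨hΩ, φ, φ', ψ, ψ', hφD, hψD, hφ, hψ, t, ht, hne⟩ := hS hz
  have h := hasFiniteAction_of_hypAction_eq hφD (hφ.trans hmin)
  have k := hasFiniteAction_of_hypAction_eq hψD (hψ.trans hmin)
  have hT : 1 < max t 2 := lt_max_of_lt_right one_lt_two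
  have hcolφ : ∀ s ∈ Icc 1 (max t 2), ¬ collision (hypCurve a (g z) φ s) := fun s hs =>
    h.not_collision_of_isMin hd hm ha hΩ.2 hmin hs.1
  have hcolψ : ∀ s ∈ Icc 1 (max t 2), ¬ collision (hypCurve a (g z) ψ s) := fun s hs =>
    k.not_collision_of_isMin hd hm ha hΩ.2 hmin hs.1
  obtain ⟨p₁, hp₁⟩ := exists_inner_eq_rampSlope hm hφD hT hcolφ hgX
  obtain ⟨p₂, hp₂⟩ := exists_inner_eq_rampSlope hm hψD hT hcolψ hgX
  refine ⟨p₁, p₂, fun hp => hne ?_,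
    h.hasSuperdiffWithinAt hm ha hmin hT hcolφ hgX hp₁ hbot,
    k.hasSuperdiffWithinAt hm ha hmin hT hcolψ hgX hp₂ hbot⟩
  refine h.eqOn_of_rampSlope_eq hm ha k hmin hT hcolφ hcolψ (fun w hw => ?_)
    ⟨ht, le_max_left _ _⟩
  obtain ⟨y, rfl⟩ := hg.superset hw
  rw [← hp₁, ← hp₂, hp]

end Superdifferential

lemma lipCovered_setOf_mem_singularSet_ne_top (hd : 2 ≤ d) (hN : 2 ≤ N) {m : Fin N → ℝ}
    (hm : ∀ i, 0 < m i) {a : Conf d N} (ha : ¬ collision a) :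
    LipCovered (d * (N - 1) - 1) {x ∈ singularSet m a | hypInf m a x ⊤ ≠ ⊤} := by
  obtain ⟨g, hg⟩ := exists_range_eq_setOf_inX (d := d) (by omega : 0 < N) hm
  have hdim : Module.finrank ℝ (EuclideanSpace ℝ (Fin (d * (N - 1)))) = d * (N - 1) - 1 + 1 := by
    have : 0 < d * (N - 1) := Nat.mul_pos (by omega) (by omega)
    rw [finrank_euclideanSpace_fin]
    omega
  have hcover : LipCovered (d * (N - 1) - 1)
      (g ⁻¹' {x ∈ singularSet m a | hypInf m a x ⊤ ≠ ⊤}) :=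
    lipCovered_of_two_superdifferentials hdim (fun z => (hypInf m a (g z) ⊤).toReal) fun _ hz =>
      exists_two_superdifferentials hd hm ha hg (fun _ hy => hy.1) hz hz.2
  refine (hcover.image g.lipschitz).mono fun x hx => ?_
  obtain ⟨z, rfl⟩ := hg.superset hx.1.1.1
  exact ⟨z, hx, rfl⟩

lemma lipCovered_singularSet (hd : 2 ≤ d) (hN : 2 ≤ N) {m : Fin N → ℝ} (hm : ∀ i, 0 < m i)
    {a : Conf d N} (ha : inOmega m a) : LipCovered (d * (N - 1) - 1) (singularSet m a) := by
  have haligned : LipCovered (d * (N - 1) - 1)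
      (⋃ p : {p : Fin N × Fin N // p.1 ≠ p.2},
        (alignedSubmodule m a p.1.1 p.1.2 : Set (Conf d N))) := by
    refine .iUnion fun p => lipCovered_submodule _ ?_
    have hlt := finrank_alignedSubmodule_lt hd hm a p.2
    rw [finrank_ker_massSum (by omega) hm] at hlt
    omega
  refine ((lipCovered_setOf_mem_singularSet_ne_top hd hN hm ha.2).union haligned).mono
    fun x hx => ?_
  by_cases hax : ∀ i j, i ≠ j → x i - x j ∉ Submodule.span ℝ {a i - a j}
  · exact Or.inl ⟨hx, hypInf_ne_top hm ha hx.1.1 hax⟩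
  · push Not at hax
    obtain ⟨i, j, hij, hmem⟩ := hax
    exact Or.inr (mem_iUnion.2 ⟨⟨(i, j), hij⟩, mem_ker_massSum.2 hx.1.1, hmem⟩)

/-- **Rectifiability of the singular set** : `Σ` is countably
`H^{d(N−1)−1}`-rectifiable, i.e. there are a set `E` of zero `H^{d(N−1)−1}`-measure and
countably many Lipschitz maps `f_i : ℝ^{d(N−1)−1} → X` with
`Σ ⊆ E ∪ ⋃ i, f_i(ℝ^{d(N−1)−1})`. -/
theorem singular_set_rectifiable {d N : ℕ} (hd : 2 ≤ d) (hN : 2 ≤ N)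
    (m : Fin N → ℝ) (hm : ∀ i, 0 < m i)
    (a : Conf d N) (ha : inOmega m a) :
    ∃ E : Set (Conf d N), μH[((d * (N - 1) - 1 : ℕ) : ℝ)] E = 0 ∧
      ∃ f : ℕ → (EuclideanSpace ℝ (Fin (d * (N - 1) - 1)) → Conf d N),
        (∀ i, ∃ Kf : NNReal, LipschitzWith Kf (f i)) ∧
        singularSet m a ⊆ E ∪ ⋃ i, Set.range (f i) := by
  obtain ⟨f, hf, hcover⟩ := lipCovered_singularSet hd hN hm ha
  exact ⟨∅, measure_empty, f, hf, hcover.trans subset_union_right⟩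

end NBodyHJ
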